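/- For every c > 0 there exist constants N > 0 and C > 0 such that for all ν ≥ N, every positive integer k, and every j that is the k-th positive zero of J_ν with ν < j < (1+c)ν, one has | j·g(ν/j) − (k − 1/4) | ≤ C/k. -/

import Mathlib

open Real MeasureTheory Set

/-- The Bessel function of the first kind of order `ν ≥ 0`, for `x > 0`, via the
integral representation. -/
noncomputable def besselJ (ν x : ℝ) : ℝ :=
  (1 / π) * (∫ θ in (0:ℝ)..π, Real.cos (x * Real.sin θ - ν * θ)) -
    (Real.sin (ν * π) / π) * ∫ t in Set.Ioi (0:ℝ), Real.exp (-x * Real.sinh t - ν * t)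

/-- The function `g(t) = (√(1-t²) - t arccos t)/π`. -/
noncomputable def gfun (t : ℝ) : ℝ := (Real.sqrt (1 - t ^ 2) - t * Real.arccos t) / π

/-- `j` is the `k`-th positive zero of `J_ν`: `j > 0`, `J_ν(j) = 0`, and there are exactly
`k - 1` zeros of `J_ν` in `(0, j)`. -/
def IsKthZero (ν : ℝ) (k : ℕ) (j : ℝ) : Prop :=
  0 < j ∧ besselJ ν j = 0 ∧ {x : ℝ | 0 < x ∧ x < j ∧ besselJ ν x = 0}.ncard = k - 1

/-! Write `φ(x) = √(x² - ν²) - ν arccos (ν / x) = π x g(ν / x)`. The Hankel function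
`π i (J_ν + i Y_ν)` is the integral of `e^{x sinh w - ν w}` along a contour from `-∞` to `∞ + π i`.
For `ν < x`, deforming this contour to the curve of steepest descent through `i arccos (ν / x)`
gives `e^{i φ(x)} (a + b i)` with `a, b > 0`. The signs of `J_ν` and `Y_ν` are thus known where `φ`
is a multiple of `π / 2`; together with the monotonicity of `J_ν / Y_ν`, given by the Wronskian,
this shows that the `k`-th zero of `J_ν` is the only one with `φ` in `((k - 1) π, k π]`, and that
there `φ` lies in `((k - 1/2) π, k π)`.

To refine this, the Liouville transformation `U = (x² - ν²)^{1/4} J_ν`, `V = dU/dφ` turns Bessel's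
equation into that of a harmonic oscillator perturbed by a positive density of integral `O(1 / φ)`
over `(x, ∞)`. Hence `U sin (φ - π/4) + V cos (φ - π/4)` changes by at most `O(|V(j)| / φ(j))`
between a zero `j` of `J_ν` and infinity, where by Laplace's method on the contour it comes
arbitrarily close to `0`. As `U(j) = 0`, this yields `|cos (φ(j) - π/4)| = O(1 / φ(j))`, which
pins `φ(j) / π` to within `O(1 / k)` of `k - 1/4`.
-/

open Filter Topology
open Complex (I)

section SinhMoment

/-- The moments `∫₀^∞ sinhⁿ t · e^{-x sinh t + μ t} dt` of the exponentially decaying part of the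
integral representation; up to sign, the `n`-th derivative in `x` of the one with `n = 0`. -/
noncomputable def sinhMoment (n : ℕ) (μ x : ℝ) : ℝ :=
  ∫ t in Ioi (0 : ℝ), sinh t ^ n * exp (-x * sinh t + μ * t)

lemma sq_div_four_le_sinh {t : ℝ} (ht : 0 ≤ t) : t ^ 2 / 4 ≤ sinh t := by
  have quadratic_le_exp := quadratic_le_exp_of_nonneg ht
  have exp_neg_le_one : exp (-t) ≤ 1 := exp_le_one_iff.mpr (by linarith)
  rw [sinh_eq]
  linarith

lemma exp_neg_mul_sinh_add_mul_le (μ : ℝ) {x : ℝ} (hx : 0 < x) {t : ℝ} (ht : 0 ≤ t) :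
    exp (-x * sinh t + μ * t) ≤ exp ((μ + 1) ^ 2 / x) * exp (-t) := by
  rw [← exp_add, exp_le_exp]
  have complete_square : (μ + 1) * t - x * (t ^ 2 / 4) ≤ (μ + 1) ^ 2 / x := by
    rw [le_div_iff₀ hx]
    linarith [sq_nonneg (x * t / 2 - (μ + 1))]
  nlinarith [sq_div_four_le_sinh ht]

lemma tendsto_exp_neg_mul_sinh_add_mul (μ : ℝ) {x : ℝ} (hx : 0 < x) :
    Tendsto (fun t : ℝ => exp (-x * sinh t + μ * t)) atTop (𝓝 0) := by
  refine tendsto_of_tendsto_of_tendsto_of_le_of_le' tendsto_const_nhds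
    (by simpa using tendsto_exp_neg_atTop_nhds_zero.const_mul (exp ((μ + 1) ^ 2 / x)))
    (Eventually.of_forall fun t => (exp_pos _).le) ?_
  filter_upwards [eventually_ge_atTop 0] with t ht
  exact exp_neg_mul_sinh_add_mul_le μ hx ht

lemma sinh_pow_mul_exp_le (n : ℕ) (μ x : ℝ) {t : ℝ} (ht : 0 ≤ t) :
    sinh t ^ n * exp (-x * sinh t + μ * t) ≤ exp (-x * sinh t + (μ + n) * t) := by
  have sinh_le_exp : sinh t ≤ exp t := by
    rw [sinh_eq]
    linarith [exp_pos t, exp_pos (-t)]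
  calc sinh t ^ n * exp (-x * sinh t + μ * t)
      ≤ exp t ^ n * exp (-x * sinh t + μ * t) := by gcongr
    _ = exp (-x * sinh t + (μ + n) * t) := by
        rw [← exp_nat_mul, ← exp_add]
        ring_nf

lemma integrableOn_sinh_pow_mul_exp (n : ℕ) (μ : ℝ) {x : ℝ} (hx : 0 < x) :
    IntegrableOn (fun t => sinh t ^ n * exp (-x * sinh t + μ * t)) (Ioi 0) := by
  refine integrable_of_isBigO_exp_neg one_pos (by fun_prop)
    (Asymptotics.IsBigO.of_bound (exp ((μ + n + 1) ^ 2 / x)) ?_)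
  filter_upwards [eventually_ge_atTop 0] with t ht
  have : 0 ≤ sinh t := sinh_nonneg_iff.mpr ht
  rw [norm_of_nonneg (by positivity), norm_of_nonneg (by positivity), neg_one_mul]
  exact (sinh_pow_mul_exp_le n μ x ht).trans (exp_neg_mul_sinh_add_mul_le _ hx ht)

lemma hasDerivAt_sinhMoment (n : ℕ) (μ : ℝ) {x : ℝ} (hx : 0 < x) :
    HasDerivAt (sinhMoment n μ) (-sinhMoment (n + 1) μ x) x := by
  have deriv_integrand (t y : ℝ) : HasDerivAt (fun y => sinh t ^ n * exp (-y * sinh t + μ * t))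
      (-(sinh t ^ (n + 1) * exp (-y * sinh t + μ * t))) y := by
    have deriv_exponent : HasDerivAt (fun y : ℝ => -y * sinh t + μ * t) (-sinh t) y := by
      simpa using ((hasDerivAt_id y).neg.mul_const (sinh t)).add_const (μ * t)
    exact (deriv_exponent.exp.const_mul (sinh t ^ n)).congr_deriv (by ring)
  have deriv_integral := (hasDerivAt_integral_of_dominated_loc_of_deriv_le
    (μ := volume.restrict (Ioi (0 : ℝ))) (s := Ioi (x / 2))
    (bound := fun t => sinh t ^ (n + 1) * exp (-(x / 2) * sinh t + μ * t))
    (Ioi_mem_nhds (half_lt_self hx))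
    (Eventually.of_forall fun y => Continuous.aestronglyMeasurable (by fun_prop))
    (F := fun y t => sinh t ^ n * exp (-y * sinh t + μ * t))
    (F' := fun y t => -(sinh t ^ (n + 1) * exp (-y * sinh t + μ * t)))
    (integrableOn_sinh_pow_mul_exp n μ hx) (Continuous.aestronglyMeasurable (by fun_prop))
    (by
      filter_upwards [ae_restrict_mem measurableSet_Ioi] with t ht y hy
      have : 0 ≤ sinh t := sinh_nonneg_iff.mpr (mem_Ioi.mp ht).le
      rw [norm_neg, norm_of_nonneg (by positivity)]
      gcongr
      exact (mem_Ioi.mp hy).le)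
    (integrableOn_sinh_pow_mul_exp (n + 1) μ (half_pos hx))
    (Eventually.of_forall fun t y _ => deriv_integrand t y)).2
  rwa [integral_neg] at deriv_integral

lemma hasDerivAt_cosh_mul_exp (μ x t : ℝ) :
    HasDerivAt (fun t => -((x * cosh t + μ) * exp (-x * sinh t + μ * t)))
      (x ^ 2 * (sinh t ^ 2 * exp (-x * sinh t + μ * t))
        - x * (sinh t ^ 1 * exp (-x * sinh t + μ * t))
        + (x ^ 2 - μ ^ 2) * (sinh t ^ 0 * exp (-x * sinh t + μ * t))) t := by
  have deriv_exponent : HasDerivAt (fun t => -x * sinh t + μ * t) (-x * cosh t + μ) t := by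
    simpa using ((hasDerivAt_sinh t).const_mul (-x)).fun_add ((hasDerivAt_id t).const_mul μ)
  have deriv_factor : HasDerivAt (fun t => x * cosh t + μ) (x * sinh t) t :=
    ((hasDerivAt_cosh t).const_mul x).add_const μ
  refine (deriv_factor.mul deriv_exponent.exp).neg.congr_deriv ?_
  linear_combination x ^ 2 * exp (-x * sinh t + μ * t) * cosh_sq t

lemma tendsto_cosh_mul_exp (μ : ℝ) {x : ℝ} (hx : 0 < x) :
    Tendsto (fun t => -((x * cosh t + μ) * exp (-x * sinh t + μ * t))) atTop (𝓝 0) := by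
  have h := ((((tendsto_exp_neg_mul_sinh_add_mul (μ + 1) hx).add
    (tendsto_exp_neg_mul_sinh_add_mul (μ - 1) hx)).const_mul (x / 2)).add
    ((tendsto_exp_neg_mul_sinh_add_mul μ hx).const_mul μ)).neg
  simp only [add_zero, mul_zero, neg_zero] at h
  refine h.congr fun t => ?_
  have shift_up : exp (-x * sinh t + (μ + 1) * t) = exp (-x * sinh t + μ * t) * exp t := by
    rw [← exp_add]
    ring_nf
  have shift_down : exp (-x * sinh t + (μ - 1) * t) = exp (-x * sinh t + μ * t) * exp (-t) := by
    rw [← exp_add]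
    ring_nf
  rw [shift_up, shift_down, cosh_eq]
  ring

lemma sinhMoment_bessel_equation (μ : ℝ) {x : ℝ} (hx : 0 < x) :
    x ^ 2 * sinhMoment 2 μ x - x * sinhMoment 1 μ x + (x ^ 2 - μ ^ 2) * sinhMoment 0 μ x
      = x + μ := by
  have int₀ := (integrableOn_sinh_pow_mul_exp 0 μ hx).const_mul (x ^ 2 - μ ^ 2)
  have int₁ := (integrableOn_sinh_pow_mul_exp 1 μ hx).const_mul x
  have int₂ := (integrableOn_sinh_pow_mul_exp 2 μ hx).const_mul (x ^ 2)
  have ftc := integral_Ioi_of_hasDerivAt_of_tendsto'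
    (fun t (_ : t ∈ Ici 0) => hasDerivAt_cosh_mul_exp μ x t) ((int₂.sub int₁).add int₀)
    (tendsto_cosh_mul_exp μ hx)
  rw [integral_add (by exact int₂.sub int₁) int₀, integral_sub int₂ int₁, integral_const_mul,
    integral_const_mul, integral_const_mul] at ftc
  simpa [sinhMoment] using ftc

end SinhMoment

section SinMoment

/-- The moments `∫₀^π (i sin θ)ⁿ e^{i (x sin θ - ν θ)} dθ` of the oscillating part of the integral
representation, that is, the `n`-th derivative in `x` of the one with `n = 0`. -/
noncomputable def sinMoment (n : ℕ) (ν x : ℝ) : ℂ :=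
  ∫ θ in (0 : ℝ)..π, (I * (sin θ : ℂ)) ^ n * Complex.exp (((x * sin θ - ν * θ : ℝ) : ℂ) * I)

lemma hasDerivAt_sinMoment (n : ℕ) (ν x : ℝ) :
    HasDerivAt (sinMoment n ν) (sinMoment (n + 1) ν x) x := by
  have continuous_integrand (m : ℕ) (y : ℝ) : Continuous fun θ : ℝ =>
      (I * (sin θ : ℂ)) ^ m * Complex.exp (((y * sin θ - ν * θ : ℝ) : ℂ) * I) := by
    fun_prop
  refine (intervalIntegral.hasDerivAt_integral_of_dominated_loc_of_deriv_le
    (F := fun (y θ : ℝ) => (I * (sin θ : ℂ)) ^ n *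
      Complex.exp (((y * sin θ - ν * θ : ℝ) : ℂ) * I))
    (F' := fun (y θ : ℝ) => (I * (sin θ : ℂ)) ^ (n + 1) *
      Complex.exp (((y * sin θ - ν * θ : ℝ) : ℂ) * I))
    (s := univ) (bound := fun _ => 1) univ_mem
    (Eventually.of_forall fun y => (continuous_integrand n y).aestronglyMeasurable)
    ((continuous_integrand n x).intervalIntegrable _ _)
    (continuous_integrand (n + 1) x).aestronglyMeasurable ?_ (by simp) ?_).2
  · refine Eventually.of_forall fun θ _ y _ => ?_
    rw [norm_mul, Complex.norm_exp_ofReal_mul_I, mul_one, norm_pow, norm_mul, Complex.norm_I,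
      one_mul, Complex.norm_real]
    exact pow_le_one₀ (norm_nonneg _) (abs_sin_le_one θ)
  · refine Eventually.of_forall fun θ _ y _ => ?_
    have deriv_exponent : HasDerivAt (fun y : ℝ => y * sin θ - ν * θ) (sin θ) y := by
      simpa using ((hasDerivAt_id y).mul_const (sin θ)).sub_const (ν * θ)
    exact ((deriv_exponent.ofReal_comp.mul_const I).cexp.const_mul
      ((I * (sin θ : ℂ)) ^ n)).congr_deriv (by ring)

lemma hasDerivAt_cos_mul_cexp (ν x θ : ℝ) :
    HasDerivAt (fun θ : ℝ => -I * ((x * cos θ + ν : ℝ) : ℂ) *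
        Complex.exp (((x * sin θ - ν * θ : ℝ) : ℂ) * I))
      ((x : ℂ) ^ 2 * ((I * (sin θ : ℂ)) ^ 2 * Complex.exp (((x * sin θ - ν * θ : ℝ) : ℂ) * I))
        + x * ((I * (sin θ : ℂ)) ^ 1 * Complex.exp (((x * sin θ - ν * θ : ℝ) : ℂ) * I))
        + ((x : ℂ) ^ 2 - (ν : ℂ) ^ 2) *
          ((I * (sin θ : ℂ)) ^ 0 * Complex.exp (((x * sin θ - ν * θ : ℝ) : ℂ) * I))) θ := by
  have deriv_exponent : HasDerivAt (fun θ => x * sin θ - ν * θ) (x * cos θ - ν) θ := by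
    simpa using ((hasDerivAt_sin θ).const_mul x).fun_sub ((hasDerivAt_id θ).const_mul ν)
  have deriv_factor : HasDerivAt (fun θ => x * cos θ + ν) (x * -sin θ) θ :=
    ((hasDerivAt_cos θ).const_mul x).add_const ν
  refine ((deriv_factor.ofReal_comp.const_mul (-I)).mul
    (deriv_exponent.ofReal_comp.mul_const I).cexp).congr_deriv ?_
  have sin_sq_add_cos_sq : Complex.sin θ ^ 2 + Complex.cos θ ^ 2 = 1 :=
    Complex.sin_sq_add_cos_sq θ
  generalize Complex.exp (((x * sin θ - ν * θ : ℝ) : ℂ) * I) = e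
  push_cast
  linear_combination (x : ℂ) ^ 2 * e * sin_sq_add_cos_sq -
    ((x : ℂ) ^ 2 * Complex.sin θ ^ 2 * e
      + e * (x * Complex.cos θ + ν) * (x * Complex.cos θ - ν)) * Complex.I_sq

lemma sinMoment_bessel_equation (ν x : ℝ) :
    (x : ℂ) ^ 2 * sinMoment 2 ν x + x * sinMoment 1 ν x
        + ((x : ℂ) ^ 2 - (ν : ℂ) ^ 2) * sinMoment 0 ν x
      = -I * ((ν - x) * Complex.exp (-(ν * π * I)) - (x + ν)) := by
  have ftc := intervalIntegral.integral_eq_sub_of_hasDerivAt (a := 0) (b := π)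
    (fun θ _ => hasDerivAt_cos_mul_cexp ν x θ)
    (Continuous.intervalIntegrable (by fun_prop) _ _)
  rw [intervalIntegral.integral_add, intervalIntegral.integral_add,
    intervalIntegral.integral_const_mul, intervalIntegral.integral_const_mul,
    intervalIntegral.integral_const_mul] at ftc
  · refine ftc.trans ?_
    simp only [cos_pi, sin_pi, cos_zero, sin_zero, mul_zero, mul_one, mul_neg, zero_sub, sub_self,
      Complex.ofReal_zero, zero_mul, Complex.exp_zero]
    push_cast
    ring_nf
  all_goals exact Continuous.intervalIntegrable (by fun_prop) _ _

end SinMoment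

section Hankel

/-- The `n`-th derivative in `x` of `π i · H_ν⁽¹⁾(x)`, where `H_ν⁽¹⁾ = J_ν + i Y_ν` is the Hankel
function, written through its Schläfli-type integral representation. -/
noncomputable def hankel (n : ℕ) (ν x : ℝ) : ℂ :=
  (-1) ^ n * sinhMoment n ν x + I * sinMoment n ν x
    + Complex.exp (-(ν * π * I)) * ((-1) ^ n * sinhMoment n (-ν) x)

lemma hasDerivAt_hankel (n : ℕ) (ν : ℝ) {x : ℝ} (hx : 0 < x) :
    HasDerivAt (hankel n ν) (hankel (n + 1) ν x) x := by
  refine ((((hasDerivAt_sinhMoment n ν hx).ofReal_comp.const_mul ((-1) ^ n)).add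
    ((hasDerivAt_sinMoment n ν x).const_mul I)).add
    (((hasDerivAt_sinhMoment n (-ν) hx).ofReal_comp.const_mul ((-1) ^ n)).const_mul
      (Complex.exp (-(ν * π * I))))).congr_deriv ?_
  rw [hankel]
  push_cast
  ring

lemma hankel_bessel_equation (ν : ℝ) {x : ℝ} (hx : 0 < x) :
    (x : ℂ) ^ 2 * hankel 2 ν x + x * hankel 1 ν x + ((x : ℂ) ^ 2 - (ν : ℂ) ^ 2) * hankel 0 ν x
      = 0 := by
  have left : (x : ℂ) ^ 2 * sinhMoment 2 ν x - x * sinhMoment 1 ν x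
      + ((x : ℂ) ^ 2 - (ν : ℂ) ^ 2) * sinhMoment 0 ν x = x + ν := by
    exact_mod_cast sinhMoment_bessel_equation ν hx
  have right : (x : ℂ) ^ 2 * sinhMoment 2 (-ν) x - x * sinhMoment 1 (-ν) x
      + ((x : ℂ) ^ 2 - (-ν : ℂ) ^ 2) * sinhMoment 0 (-ν) x = x + -ν := by
    exact_mod_cast sinhMoment_bessel_equation (-ν) hx
  have middle := sinMoment_bessel_equation ν x
  unfold hankel
  linear_combination left + Complex.exp (-(ν * π * I)) * right + I * middle
    - ((ν - x) * Complex.exp (-(ν * π * I)) - (x + ν)) * Complex.I_sq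

lemma hankel_two (ν : ℝ) {x : ℝ} (hx : 0 < x) :
    hankel 2 ν x = ((-1 / x : ℝ) : ℂ) * hankel 1 ν x
      + (((ν ^ 2 - x ^ 2) / x ^ 2 : ℝ) : ℂ) * hankel 0 ν x := by
  have hx' : (x : ℂ) ≠ 0 := by exact_mod_cast hx.ne'
  push_cast
  field_simp
  linear_combination hankel_bessel_equation ν hx

lemma hankel_zero_im (ν x : ℝ) : (hankel 0 ν x).im = π * besselJ ν x := by
  have sinMoment_re :
      (sinMoment 0 ν x).re = ∫ θ in (0 : ℝ)..π, cos (x * sin θ - ν * θ) := by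
    rw [sinMoment, ← Complex.reCLM_apply, ← Complex.reCLM.intervalIntegral_comp_comm
      (Continuous.intervalIntegrable (by fun_prop) _ _)]
    simp only [Complex.reCLM_apply, pow_zero, one_mul, Complex.exp_ofReal_mul_I_re]
  have exp_im : (Complex.exp (-(ν * π * I))).im = -sin (ν * π) := by
    rw [← sin_neg, ← Complex.exp_ofReal_mul_I_im]
    push_cast
    ring_nf
  have sinhMoment_eq : sinhMoment 0 (-ν) x = ∫ t in Ioi (0 : ℝ), exp (-x * sinh t - ν * t) := by
    simp only [sinhMoment, pow_zero, one_mul, neg_mul, sub_eq_add_neg]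
  simp only [hankel, pow_zero, one_mul, Complex.add_im, Complex.ofReal_im, zero_add,
    Complex.I_mul_im, Complex.im_mul_ofReal]
  rw [sinMoment_re, exp_im, sinhMoment_eq, besselJ]
  field_simp
  ring

end Hankel

section Contour

/-- The integrand `e^{x sinh w - ν w}` of the contour integral of the Hankel function. -/
noncomputable def hankelIntegrand (ν x : ℝ) (w : ℂ) : ℂ :=
  Complex.exp (x * Complex.sinh w - ν * w)

lemma exists_primitive_hankelIntegrand (ν x : ℝ) :
    ∃ F : ℂ → ℂ, ∀ w, HasDerivAt F (hankelIntegrand ν x w) w := by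
  have differentiable : Differentiable ℂ (hankelIntegrand ν x) := by
    unfold hankelIntegrand
    fun_prop
  obtain ⟨F, hF⟩ := Complex.IsConservativeOn.isExactOn_univ differentiable.continuous
    differentiable.differentiableOn.isConservativeOn
  exact ⟨F, fun w => hF w (mem_univ w)⟩

lemma hankelIntegrand_add_mul_I (ν x u v : ℝ) :
    hankelIntegrand ν x (u + v * I) = exp (x * sinh u * cos v - ν * u) *
      Complex.exp (((x * cosh u * sin v - ν * v : ℝ) : ℂ) * I) := by
  rw [hankelIntegrand, Complex.ofReal_exp, ← Complex.exp_add, Complex.sinh_add, Complex.sinh_mul_I,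
    Complex.cosh_mul_I]
  push_cast
  ring_nf

lemma norm_hankelIntegrand (ν x u v : ℝ) :
    ‖hankelIntegrand ν x (u + v * I)‖ = exp (x * sinh u * cos v - ν * u) := by
  rw [hankelIntegrand_add_mul_I, norm_mul, Complex.norm_exp_ofReal_mul_I, mul_one,
    Complex.norm_of_nonneg (exp_pos _).le]

lemma hankelIntegrand_pi_mul_I_sub (ν x : ℝ) (w : ℂ) :
    hankelIntegrand ν x (π * I - w)
      = Complex.exp (-(ν * π * I)) * hankelIntegrand (-ν) x w := by
  rw [hankelIntegrand, hankelIntegrand, ← Complex.exp_add, Complex.sinh_sub, Complex.sinh_mul_I,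
    Complex.cosh_mul_I, Complex.sin_pi, Complex.cos_pi]
  push_cast
  ring_nf

variable {ν x : ℝ} {F : ℂ → ℂ}

lemma norm_primitive_sub_le_of_vertical (hF : ∀ w, HasDerivAt F (hankelIntegrand ν x w) w)
    {u v C : ℝ} (hv : 0 ≤ v)
    (hC : ∀ y ∈ Icc 0 v, exp (x * sinh u * cos y - ν * u) ≤ C) :
    ‖F (u + v * I) - F u‖ ≤ C * v := by
  have deriv_vertical (y : ℝ) : HasDerivAt (fun y : ℝ => F (u + y * I))
      (hankelIntegrand ν x (u + y * I) * I) y :=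
    (hF _).comp y (by simpa using ((hasDerivAt_id y).ofReal_comp.mul_const I).const_add (u : ℂ))
  have mean_value := (convex_Icc 0 v).norm_image_sub_le_of_norm_hasDerivWithin_le
    (fun y _ => (deriv_vertical y).hasDerivWithinAt)
    (fun y hy => by simpa [norm_hankelIntegrand] using hC y hy)
    (left_mem_Icc.mpr hv) (right_mem_Icc.mpr hv)
  simpa [abs_of_nonneg hv] using mean_value

lemma tendsto_primitive_neg (hx : 0 < x) (hF : ∀ w, HasDerivAt F (hankelIntegrand ν x w) w) :
    Tendsto (fun s : ℝ => F (-s : ℝ)) atTop (𝓝 (F 0 - sinhMoment 0 ν x)) := by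
  have tendsto_integral := (Complex.continuous_ofReal.tendsto _).comp
    (intervalIntegral_tendsto_integral_Ioi 0 (integrableOn_sinh_pow_mul_exp 0 ν hx) tendsto_id)
  refine (tendsto_integral.const_sub (F 0)).congr fun s => ?_
  have deriv_neg (t : ℝ) : HasDerivAt (fun t : ℝ => -F (-t : ℝ))
      ((sinh t ^ 0 * exp (-x * sinh t + ν * t) : ℝ) : ℂ) t := by
    refine ((hF _).comp t (hasDerivAt_id t).neg.ofReal_comp).neg.congr_deriv ?_
    simp [hankelIntegrand, sub_neg_eq_add]
  rw [Function.comp_apply, ← intervalIntegral.integral_ofReal,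
    intervalIntegral.integral_eq_sub_of_hasDerivAt (fun t _ => deriv_neg t)
    (Continuous.intervalIntegrable (by fun_prop) _ _)]
  simp

lemma tendsto_primitive_left (hx : 0 < x) (hF : ∀ w, HasDerivAt F (hankelIntegrand ν x w) w)
    {ι : Type*} {l : Filter ι} {s v : ι → ℝ} (hs : Tendsto s l atTop)
    (hv : ∀ᶠ i in l, v i ∈ Icc 0 (π / 3)) :
    Tendsto (fun i => F ((-s i : ℝ) + v i * I)) l (𝓝 (F 0 - sinhMoment 0 ν x)) := by
  suffices vertical : Tendsto (fun i => F ((-s i : ℝ) + v i * I) - F (-s i : ℝ)) l (𝓝 0) by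
    simpa using vertical.add ((tendsto_primitive_neg hx hF).comp hs)
  have bound_tendsto : Tendsto
      (fun i => exp (-(x / 2) * sinh (s i) + ν * s i) * (π / 3)) l (𝓝 0) := by
    simpa using
      ((tendsto_exp_neg_mul_sinh_add_mul ν (half_pos hx)).comp hs).mul_const (π / 3)
  refine squeeze_zero_norm' ?_ bound_tendsto
  filter_upwards [hv, hs.eventually_ge_atTop 0] with i hvi hsi
  refine (norm_primitive_sub_le_of_vertical hF hvi.1 fun y hy => ?_).trans
    (mul_le_mul_of_nonneg_left hvi.2 (exp_pos _).le)
  have half_le_cos : 1 / 2 ≤ cos y := by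
    rw [← cos_pi_div_three]
    exact cos_le_cos_of_nonneg_of_le_pi hy.1 (by linarith [pi_pos]) (hy.2.trans hvi.2)
  have := mul_le_mul_of_nonneg_left half_le_cos
    (mul_nonneg hx.le (sinh_nonneg_iff.mpr hsi))
  rw [sinh_neg, exp_le_exp]
  linarith

lemma tendsto_primitive_right_of_left (hx : 0 < x)
    (hF : ∀ w, HasDerivAt F (hankelIntegrand ν x w) w)
    {ι : Type*} {l : Filter ι} {s v : ι → ℝ} (hs : Tendsto s l atTop)
    (hv : ∀ᶠ i in l, v i ∈ Icc (2 * π / 3) π) :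
    Tendsto (fun i => F (s i + v i * I)) l
      (𝓝 (F (π * I) + Complex.exp (-(ν * π * I)) * sinhMoment 0 (-ν) x)) := by
  have exp_cancel : Complex.exp (-(ν * π * I)) * Complex.exp (ν * π * I) = 1 := by
    rw [← Complex.exp_add, neg_add_cancel, Complex.exp_zero]
  -- The substitution `w ↦ π i - w` exchanges the two ends of the contour and replaces `ν` by `-ν`.
  have reflected (w : ℂ) : HasDerivAt (fun w => -(Complex.exp (ν * π * I) * F (π * I - w)))
      (hankelIntegrand (-ν) x w) w := by
    refine (((hF _).comp w ((hasDerivAt_id w).const_sub (π * I))).const_mul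
      (Complex.exp (ν * π * I))).neg.congr_deriv ?_
    rw [id_eq, hankelIntegrand_pi_mul_I_sub]
    linear_combination hankelIntegrand (-ν) x w * exp_cancel
  have left_limit := (tendsto_primitive_left hx reflected (v := fun i => π - v i) hs
    (by filter_upwards [hv] with i hi using ⟨by linarith [hi.2], by linarith [hi.1]⟩)).const_mul
    (-Complex.exp (-(ν * π * I)))
  convert left_limit using 1
  · ext i
    push_cast
    rw [show π * I - (-(s i : ℂ) + (π - v i) * I) = s i + v i * I by ring]
    linear_combination -F (s i + v i * I) * exp_cancel
  · rw [sub_zero]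
    congr 1
    linear_combination -F (π * I) * exp_cancel

lemma I_mul_sinMoment_zero (hF : ∀ w, HasDerivAt F (hankelIntegrand ν x w) w) :
    I * sinMoment 0 ν x = F (π * I) - F 0 := by
  have deriv_vertical (θ : ℝ) : HasDerivAt (fun θ : ℝ => F (θ * I))
      (I * ((I * (sin θ : ℂ)) ^ 0 * Complex.exp (((x * sin θ - ν * θ : ℝ) : ℂ) * I))) θ := by
    have deriv_path : HasDerivAt (fun θ : ℝ => (θ : ℂ) * I) I θ := by
      simpa using (hasDerivAt_id θ).ofReal_comp.mul_const I
    refine ((hF _).comp θ deriv_path).congr_deriv ?_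
    have := hankelIntegrand_add_mul_I ν x 0 θ
    simp only [Complex.ofReal_zero, zero_add, sinh_zero, cosh_zero, mul_zero, zero_mul, sub_zero,
      exp_zero, mul_one, Complex.ofReal_one, one_mul] at this
    rw [this, pow_zero, one_mul, mul_comm]
  rw [sinMoment, ← intervalIntegral.integral_const_mul,
    intervalIntegral.integral_eq_sub_of_hasDerivAt (fun θ _ => deriv_vertical θ)
      (Continuous.intervalIntegrable (by fun_prop) _ _)]
  simp

lemma tendsto_primitive_right (hx : 0 < x) (hF : ∀ w, HasDerivAt F (hankelIntegrand ν x w) w)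
    {ι : Type*} {l : Filter ι} {s v : ι → ℝ} (hs : Tendsto s l atTop)
    (hv : ∀ᶠ i in l, v i ∈ Icc (2 * π / 3) π) :
    Tendsto (fun i => F (s i + v i * I)) l
      (𝓝 (F 0 - sinhMoment 0 ν x + hankel 0 ν x)) := by
  convert tendsto_primitive_right_of_left hx hF hs hv using 2
  rw [hankel, pow_zero, one_mul, one_mul]
  linear_combination I_mul_sinMoment_zero hF

end Contour

section Phase

/-- The phase `√(x² - ν²) - ν arccos (ν / x)` of the Debye expansion of the Bessel functions in the
oscillatory region `ν < x`; it equals `π x g(ν / x)`. -/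
noncomputable def besselPhase (ν x : ℝ) : ℝ :=
  √(x ^ 2 - ν ^ 2) - ν * arccos (ν / x)

lemma besselPhase_mul_cos {x β : ℝ} (hx : 0 < x) (hβ : β ∈ Icc 0 π) :
    besselPhase (x * cos β) x = x * sin β - x * cos β * β := by
  have sqrt_eq : √(x ^ 2 - (x * cos β) ^ 2) = x * sin β := by
    rw [← sqrt_sq (mul_nonneg hx.le (sin_nonneg_of_mem_Icc hβ)), mul_pow x (sin β), sin_sq]
    ring_nf
  rw [besselPhase, sqrt_eq, mul_div_cancel_left₀ _ hx.ne', arccos_cos hβ.1 hβ.2]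

end Phase

section SteepestDescent

/-- The line tangent to the graph of `sin` at `β`. -/
noncomputable def sinTangent (β v : ℝ) : ℝ := sin β + (v - β) * cos β

/-- The hyperbolic cosine of the real part of the point with imaginary part `v` on the curve of
steepest descent through the saddle point `i β` of `w ↦ x sinh w - x cos β · w`: it is determined by
`Im (x sinh w - x cos β · w) = x sin β - x cos β · β`. -/
noncomputable def descentCosh (β v : ℝ) : ℝ := sinTangent β v / sin v

/-- The branch with sign `σ = ± 1` of the curve of steepest descent through the saddle point `i β`,
parametrized by the imaginary part `v ∈ (0, π)`. -/
noncomputable def descentCurve (σ β v : ℝ) : ℂ := ((σ * arcosh (descentCosh β v) : ℝ) : ℂ) + v * I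

lemma hasDerivAt_sinTangent (β v : ℝ) : HasDerivAt (sinTangent β) (cos β) v := by
  exact ((((hasDerivAt_id v).sub_const β).mul_const (cos β)).const_add (sin β)).congr_deriv
    (one_mul _)

variable {β : ℝ}

lemma sinTangent_pos (hβ : β ∈ Ioo 0 (π / 2)) {v : ℝ} (hv : 0 ≤ v) : 0 < sinTangent β v := by
  have cos_pos : 0 < cos β := cos_pos_of_mem_Ioo ⟨by linarith [hβ.1, pi_pos], hβ.2⟩
  have mul_cos_lt_sin : β * cos β < sin β := by
    have := lt_tan hβ.1 hβ.2
    rwa [tan_eq_sin_div_cos, lt_div_iff₀ cos_pos] at this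
  rw [sinTangent]
  linarith [mul_nonneg hv cos_pos.le]

lemma sin_lt_sinTangent (hβ : β ∈ Icc 0 π) {v : ℝ} (hv : v ∈ Icc 0 π) (hne : v ≠ β) :
    sin v < sinTangent β v := by
  rw [sinTangent]
  rcases hne.lt_or_gt with hlt | hgt
  · have := strictConcaveOn_sin_Icc.lt_slope_of_hasDerivAt hv hβ hlt (hasDerivAt_sin β)
    rw [slope_def_field, lt_div_iff₀ (by linarith)] at this
    linarith
  · have := strictConcaveOn_sin_Icc.slope_lt_of_hasDerivAt hβ hv hgt (hasDerivAt_sin β)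
    rw [slope_def_field, div_lt_iff₀ (by linarith)] at this
    linarith

lemma one_lt_descentCosh (hβ : β ∈ Icc 0 π) {v : ℝ} (hv : v ∈ Ioo 0 π) (hne : v ≠ β) :
    1 < descentCosh β v := by
  rw [descentCosh, one_lt_div (sin_pos_of_mem_Ioo hv)]
  exact sin_lt_sinTangent hβ (Ioo_subset_Icc_self hv) hne

lemma descentCosh_self (hβ : β ∈ Ioo 0 π) : descentCosh β β = 1 := by
  simp [descentCosh, sinTangent, (sin_pos_of_mem_Ioo hβ).ne']

lemma one_le_descentCosh (hβ : β ∈ Ioo 0 π) {v : ℝ} (hv : v ∈ Ioo 0 π) :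
    1 ≤ descentCosh β v := by
  rcases eq_or_ne v β with rfl | hne
  · exact (descentCosh_self hv).ge
  · exact (one_lt_descentCosh (Ioo_subset_Icc_self hβ) hv hne).le

lemma hasDerivAt_descentCosh {v : ℝ} (hv : sin v ≠ 0) :
    HasDerivAt (descentCosh β) ((sin (v - β) - (v - β) * cos β * cos v) / sin v ^ 2) v := by
  refine ((hasDerivAt_sinTangent β v).div (hasDerivAt_sin v) hv).congr_deriv ?_
  rw [sinTangent, sin_sub]
  ring

lemma strictMonoOn_descentCosh_deriv_numerator (hβ : β ∈ Ioo 0 (π / 2)) :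
    StrictMonoOn (fun v => sin (v - β) - (v - β) * cos β * cos v) (Icc 0 π) := by
  have deriv_numerator (v : ℝ) : HasDerivAt (fun v => sin (v - β) - (v - β) * cos β * cos v)
      (sin v * sinTangent β v) v := by
    have deriv_sub : HasDerivAt (fun v => v - β) 1 v := (hasDerivAt_id v).sub_const β
    refine (deriv_sub.sin.sub
      ((deriv_sub.mul_const (cos β)).mul (hasDerivAt_cos v))).congr_deriv ?_
    rw [sinTangent, cos_sub]
    ring
  refine strictMonoOn_of_deriv_pos (convex_Icc _ _) (by fun_prop) fun v hv => ?_
  rw [interior_Icc] at hv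
  rw [(deriv_numerator v).deriv]
  exact mul_pos (sin_pos_of_mem_Ioo hv) (sinTangent_pos hβ hv.1.le)

lemma descentCosh_deriv_numerator_neg (hβ : β ∈ Ioo 0 (π / 2)) {v : ℝ} (hv : v ∈ Ioo 0 β) :
    sin (v - β) - (v - β) * cos β * cos v < 0 := by
  simpa using strictMonoOn_descentCosh_deriv_numerator hβ
    ⟨hv.1.le, by linarith [hv.2, hβ.2, pi_pos]⟩
    ⟨hβ.1.le, by linarith [hβ.2, pi_pos]⟩ hv.2

lemma descentCosh_deriv_numerator_pos (hβ : β ∈ Ioo 0 (π / 2)) {v : ℝ} (hv : v ∈ Ioo β π) :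
    0 < sin (v - β) - (v - β) * cos β * cos v := by
  simpa using strictMonoOn_descentCosh_deriv_numerator hβ
    ⟨hβ.1.le, by linarith [hβ.2, pi_pos]⟩ ⟨by linarith [hv.1, hβ.1], hv.2.le⟩ hv.1

lemma tendsto_descentCosh_atTop (hβ : β ∈ Ioo 0 (π / 2)) {a : ℝ} (ha : 0 ≤ a) (sin_a : sin a = 0)
    {l : Filter ℝ} (hla : l ≤ 𝓝 a) (hl : ∀ᶠ v in l, v ∈ Ioo 0 π) :
    Tendsto (descentCosh β) l atTop := by
  have tangent_tendsto : Tendsto (sinTangent β) l (𝓝 (sinTangent β a)) :=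
    (hasDerivAt_sinTangent β a).continuousAt.tendsto.mono_left hla
  have sin_tendsto : Tendsto sin l (𝓝[>] 0) := by
    refine tendsto_nhdsWithin_of_tendsto_nhds_of_eventually_within _ ?_
      (hl.mono fun v hv => sin_pos_of_mem_Ioo hv)
    simpa only [sin_a] using (continuous_sin.tendsto a).mono_left hla
  exact tangent_tendsto.pos_mul_atTop (sinTangent_pos hβ ha) sin_tendsto.inv_tendsto_nhdsGT_zero

lemma tendsto_arcosh_atTop : Tendsto arcosh atTop atTop := by
  refine tendsto_atTop_mono' _ ?_ tendsto_log_atTop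
  filter_upwards [eventually_ge_atTop 1] with y hy
  exact log_le_log (by linarith) (le_add_of_nonneg_right (sqrt_nonneg _))

lemma descentCurve_self (hβ : β ∈ Ioo 0 π) (σ : ℝ) : descentCurve σ β β = β * I := by
  simp [descentCurve, descentCosh_self hβ]

lemma continuousOn_descentCurve (hβ : β ∈ Ioo 0 π) (σ : ℝ) :
    ContinuousOn (descentCurve σ β) (Ioo 0 π) := by
  have arcosh_continuous : ContinuousOn (fun v => arcosh (descentCosh β v)) (Ioo 0 π) :=
    continuousOn_arcosh.comp (fun v hv =>
      (hasDerivAt_descentCosh (sin_pos_of_mem_Ioo hv).ne').continuousAt.continuousWithinAt)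
      (fun v hv => one_le_descentCosh hβ hv)
  exact (Complex.continuous_ofReal.comp_continuousOn (arcosh_continuous.const_smul σ)).add
    (by fun_prop)

lemma exists_hasDerivAt_descentCurve (hβ : β ∈ Ioo 0 π) {σ v : ℝ} (hv : v ∈ Ioo 0 π)
    (hne : v ≠ β) (hσ : 0 < σ * (sin (v - β) - (v - β) * cos β * cos v)) :
    ∃ d : ℝ, 0 < d ∧ HasDerivAt (descentCurve σ β) (d + I) v := by
  have sin_pos := sin_pos_of_mem_Ioo hv
  have one_lt := one_lt_descentCosh (Ioo_subset_Icc_self hβ) hv hne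
  have sqrt_pos : 0 < √(descentCosh β v ^ 2 - 1) := sqrt_pos.mpr (by nlinarith)
  have deriv_re := (((hasDerivAt_arcosh one_lt).comp v
    (hasDerivAt_descentCosh sin_pos.ne')).const_mul σ).ofReal_comp
  have deriv_im : HasDerivAt (fun v : ℝ => (v : ℂ) * I) I v := by
    simpa using (hasDerivAt_id v).ofReal_comp.mul_const I
  refine ⟨_, ?_, deriv_re.add deriv_im⟩
  rw [mul_left_comm, mul_div_assoc']
  positivity

lemma exists_hankelIntegrand_descentCurve (hβ : β ∈ Ioo 0 π) {σ : ℝ}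
    (hσ : σ = 1 ∨ σ = -1) {x v : ℝ} (hx : 0 < x) (hv : v ∈ Ioo 0 π) :
    ∃ r : ℝ, 0 < r ∧ hankelIntegrand (x * cos β) x (descentCurve σ β v) =
      r * Complex.exp (besselPhase (x * cos β) x * I) := by
  refine ⟨exp _, exp_pos _, (hankelIntegrand_add_mul_I _ _ _ _).trans (congrArg _ ?_)⟩
  have cosh_eq : cosh (σ * arcosh (descentCosh β v)) = descentCosh β v := by
    have := cosh_arcosh (one_le_descentCosh hβ hv)
    rcases hσ with rfl | rfl <;> simpa [cosh_neg] using this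
  rw [cosh_eq, besselPhase_mul_cos hx (Ioo_subset_Icc_self hβ), descentCosh, sinTangent]
  have := (sin_pos_of_mem_Ioo hv).ne'
  congr 3
  field_simp
  ring

end SteepestDescent

section Quadrant

lemma lt_of_strictMonoOn_Ioc_of_tendsto {f : ℝ → ℝ} {a b l : ℝ} (hab : a < b)
    (hf : StrictMonoOn f (Ioc a b)) (hl : Tendsto f (𝓝[>] a) (𝓝 l)) : l < f b := by
  obtain ⟨m, ham, hmb⟩ := exists_between hab
  refine lt_of_le_of_lt (le_of_tendsto hl ?_) (hf ⟨ham, hmb.le⟩ ⟨hab, le_rfl⟩ hmb)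
  filter_upwards [Ioo_mem_nhdsGT ham] with v hv
  exact (hf ⟨hv.1, (hv.2.trans hmb).le⟩ ⟨ham, hmb.le⟩ hv.2).le

lemma lt_of_strictMonoOn_Ico_of_tendsto {f : ℝ → ℝ} {a b l : ℝ} (hab : a < b)
    (hf : StrictMonoOn f (Ico a b)) (hl : Tendsto f (𝓝[<] b) (𝓝 l)) : f a < l := by
  obtain ⟨m, ham, hmb⟩ := exists_between hab
  refine lt_of_lt_of_le (hf ⟨le_rfl, hab⟩ ⟨ham.le, hmb⟩ ham) (ge_of_tendsto hl ?_)
  filter_upwards [Ioo_mem_nhdsLT hmb] with v hv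
  exact (hf ⟨ham.le, hmb⟩ ⟨(ham.trans hv.1).le, hv.2⟩ hv.1).le

variable {β x : ℝ} {F : ℂ → ℂ} {L : ℂ →L[ℝ] ℝ}

lemma strictMonoOn_primitive_descentCurve (hβ : β ∈ Ioo 0 (π / 2)) (hx : 0 < x)
    (hF : ∀ w, HasDerivAt F (hankelIntegrand (x * cos β) x w) w)
    (hL : ∀ d : ℝ, 0 < d → 0 < L (d + I)) {σ : ℝ} (hσ : σ = 1 ∨ σ = -1)
    {D : Set ℝ} (hD : Convex ℝ D) (hDπ : D ⊆ Ioo 0 π)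
    (hσD : ∀ v ∈ interior D, v ≠ β ∧ 0 < σ * (sin (v - β) - (v - β) * cos β * cos v)) :
    StrictMonoOn (fun v => L (Complex.exp (-(besselPhase (x * cos β) x * I)) *
      F (descentCurve σ β v))) D := by
  have hβπ : β ∈ Ioo 0 π := ⟨hβ.1, by linarith [hβ.2, pi_pos]⟩
  have continuous_F : Continuous F :=
    continuous_iff_continuousAt.mpr fun w => (hF w).continuousAt
  refine strictMonoOn_of_deriv_pos hD (L.continuous.comp_continuousOn (continuousOn_const.mul
    (continuous_F.comp_continuousOn ((continuousOn_descentCurve hβπ σ).mono hDπ)))) fun v hv => ?_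
  have hvπ := hDπ (interior_subset hv)
  obtain ⟨d, hd, deriv_curve⟩ :=
    exists_hasDerivAt_descentCurve hβπ hvπ (hσD v hv).1 (hσD v hv).2
  obtain ⟨r, hr, integrand_eq⟩ := exists_hankelIntegrand_descentCurve hβπ hσ hx hvπ
  have deriv_rotated := L.hasFDerivAt.comp_hasDerivAt v (((hF _).comp v deriv_curve).const_mul
    (Complex.exp (-(besselPhase (x * cos β) x * I))))
  have deriv_eq : Complex.exp (-(besselPhase (x * cos β) x * I)) *
      (hankelIntegrand (x * cos β) x (descentCurve σ β v) * (d + I)) = r • ((d : ℂ) + I) := by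
    rw [integrand_eq, Complex.real_smul, Complex.exp_neg]
    field_simp [Complex.exp_ne_zero]
  rw [deriv_eq, map_smul] at deriv_rotated
  exact (smul_pos hr (hL d hd)).trans_eq deriv_rotated.deriv.symm

lemma left_limit_lt_primitive_saddle (hβ : β ∈ Ioo 0 (π / 2)) (hx : 0 < x)
    (hF : ∀ w, HasDerivAt F (hankelIntegrand (x * cos β) x w) w)
    (hL : ∀ d : ℝ, 0 < d → 0 < L (d + I)) :
    L (Complex.exp (-(besselPhase (x * cos β) x * I)) * (F 0 - sinhMoment 0 (x * cos β) x))
      < L (Complex.exp (-(besselPhase (x * cos β) x * I)) * F (β * I)) := by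
  have hβπ : β ∈ Ioo 0 π := ⟨hβ.1, by linarith [hβ.2, pi_pos]⟩
  have strictMono := strictMonoOn_primitive_descentCurve hβ hx hF hL (Or.inr rfl)
    (convex_Ioc 0 β) (fun v hv => ⟨hv.1, hv.2.trans_lt hβπ.2⟩) (fun v hv => by
      rw [interior_Ioc] at hv
      exact ⟨hv.2.ne, by linarith [descentCosh_deriv_numerator_neg hβ hv]⟩)
  have limit : Tendsto (fun v => F (descentCurve (-1) β v)) (𝓝[>] 0)
      (𝓝 (F 0 - sinhMoment 0 (x * cos β) x)) := by
    simpa [descentCurve] using tendsto_primitive_left hx hF (v := id) (tendsto_arcosh_atTop.comp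
      (tendsto_descentCosh_atTop hβ le_rfl sin_zero nhdsWithin_le_nhds (Ioo_mem_nhdsGT pi_pos)))
      (mem_of_superset (Ioo_mem_nhdsGT (by positivity)) Ioo_subset_Icc_self)
  simpa [descentCurve_self hβπ] using lt_of_strictMonoOn_Ioc_of_tendsto hβ.1 strictMono
    ((L.continuous.tendsto _).comp (limit.const_mul _))

lemma primitive_saddle_lt_right_limit (hβ : β ∈ Ioo 0 (π / 2)) (hx : 0 < x)
    (hF : ∀ w, HasDerivAt F (hankelIntegrand (x * cos β) x w) w)
    (hL : ∀ d : ℝ, 0 < d → 0 < L (d + I)) :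
    L (Complex.exp (-(besselPhase (x * cos β) x * I)) * F (β * I))
      < L (Complex.exp (-(besselPhase (x * cos β) x * I)) *
          (F 0 - sinhMoment 0 (x * cos β) x + hankel 0 (x * cos β) x)) := by
  have hβπ : β ∈ Ioo 0 π := ⟨hβ.1, by linarith [hβ.2, pi_pos]⟩
  have strictMono := strictMonoOn_primitive_descentCurve hβ hx hF hL (Or.inl rfl)
    (convex_Ico β π) (fun v hv => ⟨hβ.1.trans_le hv.1, hv.2⟩) (fun v hv => by
      rw [interior_Ico] at hv
      exact ⟨hv.1.ne', by linarith [descentCosh_deriv_numerator_pos hβ hv]⟩)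
  have limit : Tendsto (fun v => F (descentCurve 1 β v)) (𝓝[<] π)
      (𝓝 (F 0 - sinhMoment 0 (x * cos β) x + hankel 0 (x * cos β) x)) := by
    simpa [descentCurve] using tendsto_primitive_right hx hF (v := id) (tendsto_arcosh_atTop.comp
      (tendsto_descentCosh_atTop hβ pi_pos.le sin_pi nhdsWithin_le_nhds (Ioo_mem_nhdsLT pi_pos)))
      (mem_of_superset (Ioo_mem_nhdsLT (by linarith [pi_pos])) Ioo_subset_Icc_self)
  simpa [descentCurve_self hβπ] using lt_of_strictMonoOn_Ico_of_tendsto hβπ.2 strictMono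
    ((L.continuous.tendsto _).comp (limit.const_mul _))

theorem exists_hankel_zero_eq_exp_besselPhase_mul {ν x : ℝ} (hν : 0 < ν) (hx : ν < x) :
    ∃ a b : ℝ, 0 < a ∧ 0 < b ∧
      hankel 0 ν x = Complex.exp (besselPhase ν x * I) * (a + b * I) := by
  have hx₀ : 0 < x := hν.trans hx
  obtain ⟨β, hβ, rfl⟩ : ∃ β ∈ Ioo 0 (π / 2), ν = x * cos β := by
    have ratio_lt_one : ν / x < 1 := (div_lt_one hx₀).mpr hx
    refine ⟨arccos (ν / x), ⟨arccos_pos.mpr ratio_lt_one,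
      arccos_lt_pi_div_two.mpr (by positivity)⟩, ?_⟩
    rw [cos_arccos (by linarith [div_pos hν hx₀]) ratio_lt_one.le, mul_div_cancel₀ _ hx₀.ne']
  obtain ⟨F, hF⟩ := exists_primitive_hankelIntegrand (x * cos β) x
  set z := Complex.exp (-(besselPhase (x * cos β) x * I)) * hankel 0 (x * cos β) x with hz
  have pos_of_pos_on_quadrant (L : ℂ →L[ℝ] ℝ) (hL : ∀ d : ℝ, 0 < d → 0 < L (d + I)) :
      0 < L z := by
    have := (left_limit_lt_primitive_saddle hβ hx₀ hF hL).trans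
      (primitive_saddle_lt_right_limit hβ hx₀ hF hL)
    rw [mul_add, map_add] at this
    linarith
  refine ⟨z.re, z.im, pos_of_pos_on_quadrant Complex.reCLM (by simp),
    pos_of_pos_on_quadrant Complex.imCLM (by simp), ?_⟩
  rw [Complex.re_add_im, hz, ← mul_assoc, ← Complex.exp_add, add_neg_cancel, Complex.exp_zero,
    one_mul]

end Quadrant

section PhaseGrowth

variable {ν x : ℝ}

lemma sqrt_sq_sub_sq_pos (hν : 0 < ν) (hx : ν < x) : 0 < √(x ^ 2 - ν ^ 2) :=
  sqrt_pos.mpr (sub_pos.mpr (by gcongr))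

lemma sq_sqrt_sq_sub_sq (hν : 0 < ν) (hx : ν < x) : √(x ^ 2 - ν ^ 2) ^ 2 = x ^ 2 - ν ^ 2 :=
  sq_sqrt (sub_nonneg.mpr (by gcongr))

lemma hasDerivAt_sqrt_sq_sub_sq (hν : 0 < ν) (hx : ν < x) :
    HasDerivAt (fun x => √(x ^ 2 - ν ^ 2)) (x / √(x ^ 2 - ν ^ 2)) x := by
  have sq_sub_ne_zero : x ^ 2 - ν ^ 2 ≠ 0 := (sqrt_pos.mp (sqrt_sq_sub_sq_pos hν hx)).ne'
  have deriv_sq : HasDerivAt (fun x : ℝ => x ^ 2 - ν ^ 2) (2 * x) x := by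
    simpa using (hasDerivAt_pow 2 x).sub_const (ν ^ 2)
  exact (deriv_sq.sqrt sq_sub_ne_zero).congr_deriv (mul_div_mul_left _ _ two_ne_zero)

lemma sqrt_one_sub_div_sq (hx : 0 < x) (ν : ℝ) :
    √(1 - (ν / x) ^ 2) = √(x ^ 2 - ν ^ 2) / x := by
  rw [← sqrt_sq hx.le, ← sqrt_div' _ (sq_nonneg x), sqrt_sq hx.le]
  congr 1
  field_simp

lemma mul_gfun_div (hx : 0 < x) (ν : ℝ) : x * gfun (ν / x) = besselPhase ν x / π := by
  rw [gfun, sqrt_one_sub_div_sq hx, besselPhase]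
  field_simp

lemma hasDerivAt_besselPhase (hν : 0 < ν) (hx : ν < x) :
    HasDerivAt (besselPhase ν) (√(x ^ 2 - ν ^ 2) / x) x := by
  have hx₀ : 0 < x := hν.trans hx
  have ratio_pos : 0 < ν / x := by positivity
  have ratio_lt_one : ν / x < 1 := (div_lt_one hx₀).mpr hx
  have deriv_ratio : HasDerivAt (fun x => ν / x) (-ν / x ^ 2) x := by
    simpa using (hasDerivAt_const x ν).fun_div (hasDerivAt_id' x) hx₀.ne'
  have deriv_arccos :=
    (hasDerivAt_arccos (by linarith) ratio_lt_one.ne).comp x deriv_ratio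
  refine ((hasDerivAt_sqrt_sq_sub_sq hν hx).sub (deriv_arccos.const_mul ν)).congr_deriv ?_
  rw [sqrt_one_sub_div_sq hx₀]
  have := sqrt_sq_sub_sq_pos hν hx
  field_simp
  linear_combination -sq_sqrt_sq_sub_sq hν hx

lemma continuousOn_besselPhase (hν : 0 < ν) : ContinuousOn (besselPhase ν) (Ici ν) := by
  have continuousOn_ratio : ContinuousOn (fun x => ν / x) (Ici ν) :=
    continuousOn_const.div continuousOn_id fun x hx => (hν.trans_le hx).ne'
  have continuousOn_sqrt : ContinuousOn (fun x => √(x ^ 2 - ν ^ 2)) (Ici ν) := by fun_prop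
  exact continuousOn_sqrt.sub
    (continuousOn_const.mul (continuous_arccos.comp_continuousOn continuousOn_ratio))

lemma besselPhase_self (hν : 0 < ν) : besselPhase ν ν = 0 := by
  simp [besselPhase, hν.ne']

lemma strictMonoOn_besselPhase (hν : 0 < ν) : StrictMonoOn (besselPhase ν) (Ici ν) := by
  refine strictMonoOn_of_deriv_pos (convex_Ici ν) (continuousOn_besselPhase hν) fun x hx => ?_
  rw [interior_Ici] at hx
  rw [(hasDerivAt_besselPhase hν hx).deriv]
  exact div_pos (sqrt_sq_sub_sq_pos hν hx) (hν.trans hx)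

lemma besselPhase_pos (hν : 0 < ν) (hx : ν < x) : 0 < besselPhase ν x :=
  (besselPhase_self hν).symm.trans_lt (strictMonoOn_besselPhase hν self_mem_Ici hx.le hx)

lemma tendsto_sqrt_sq_sub_sq_sub (ν : ℝ) :
    Tendsto (fun x : ℝ => √(x ^ 2 - ν ^ 2) - x) atTop (𝓝 0) := by
  have limit_bound : Tendsto (fun x : ℝ => ν ^ 2 / x) atTop (𝓝 0) :=
    tendsto_const_nhds.div_atTop tendsto_id
  refine squeeze_zero_norm' ?_ limit_bound
  filter_upwards [eventually_gt_atTop |ν|] with x hx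
  have hx₀ : 0 < x := (abs_nonneg ν).trans_lt hx
  have sq_le : ν ^ 2 ≤ x ^ 2 := (sq_abs ν).symm.trans_le (by gcongr)
  have sqrt_le : √(x ^ 2 - ν ^ 2) ≤ x := sqrt_le_iff.mpr ⟨hx₀.le, by linarith [sq_nonneg ν]⟩
  have sq_sqrt_eq := sq_sqrt (sub_nonneg.mpr sq_le)
  rw [norm_eq_abs, abs_of_nonpos (by linarith), le_div_iff₀ hx₀]
  nlinarith [sqrt_nonneg (x ^ 2 - ν ^ 2)]

lemma tendsto_besselPhase_sub (ν : ℝ) :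
    Tendsto (fun x => besselPhase ν x - (x - ν * π / 2)) atTop (𝓝 0) := by
  have limit_arccos : Tendsto (fun x : ℝ => arccos (ν / x)) atTop (𝓝 (π / 2)) := by
    rw [← arccos_zero]
    exact (continuous_arccos.tendsto 0).comp (tendsto_const_nhds.div_atTop tendsto_id)
  have limit := (tendsto_sqrt_sq_sub_sq_sub ν).sub
    ((limit_arccos.const_mul ν).sub_const (ν * (π / 2)))
  rw [sub_self, sub_zero] at limit
  refine limit.congr fun x => ?_
  rw [besselPhase]
  ring

lemma tendsto_besselPhase_atTop (ν : ℝ) : Tendsto (besselPhase ν) atTop atTop := by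
  have limit_linear : Tendsto (fun x : ℝ => x - ν * π / 2) atTop atTop :=
    tendsto_atTop_add_const_right _ _ tendsto_id
  simpa using limit_linear.atTop_add (tendsto_besselPhase_sub ν)

lemma exists_besselPhase_eq {y : ℝ} (hν : 0 < ν) (hy : 0 < y) :
    ∃ x, ν < x ∧ besselPhase ν x = y := by
  obtain ⟨b, hyb, hνb⟩ := (((tendsto_besselPhase_atTop ν).eventually_ge_atTop y).and
    (eventually_ge_atTop ν)).exists
  have surj := intermediate_value_Icc hνb
    ((continuousOn_besselPhase hν).mono Icc_subset_Ici_self)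
  rw [besselPhase_self hν] at surj
  obtain ⟨x, hx, rfl⟩ := surj ⟨hy.le, hyb⟩
  refine ⟨x, hx.1.lt_of_ne ?_, rfl⟩
  rintro rfl
  exact hy.ne' (besselPhase_self hν)

lemma besselPhase_le_sqrt (hν : 0 ≤ ν) (x : ℝ) : besselPhase ν x ≤ √(x ^ 2 - ν ^ 2) :=
  sub_le_self _ (mul_nonneg hν (arccos_nonneg _))

lemma three_mul_sq_mul_besselPhase_le (hν : 0 < ν) (hx : ν ≤ x) :
    3 * ν ^ 2 * besselPhase ν x ≤ √(x ^ 2 - ν ^ 2) ^ 3 := by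
  have continuousOn_sqrt : ContinuousOn (fun x => √(x ^ 2 - ν ^ 2) ^ 3) (Ici ν) := by fun_prop
  have monotone : MonotoneOn
      (fun x => √(x ^ 2 - ν ^ 2) ^ 3 - 3 * ν ^ 2 * besselPhase ν x) (Ici ν) := by
    refine monotoneOn_of_hasDerivWithinAt_nonneg
      (f' := fun x => 3 * √(x ^ 2 - ν ^ 2) * √(x ^ 2 - ν ^ 2) ^ 2 / x) (convex_Ici ν)
      (continuousOn_sqrt.sub (continuousOn_const.mul (continuousOn_besselPhase hν)))
      (fun y hy => ?_) (fun y hy => ?_) <;>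
    rw [interior_Ici, mem_Ioi] at hy
    · have hy₀ : 0 < y := hν.trans hy
      have := sqrt_sq_sub_sq_pos hν hy
      refine ((((hasDerivAt_sqrt_sq_sub_sq hν hy).pow 3).sub
        ((hasDerivAt_besselPhase hν hy).const_mul (3 * ν ^ 2))).congr_deriv ?_).hasDerivWithinAt
      push_cast
      field_simp
      linear_combination -sq_sqrt_sq_sub_sq hν hy
    · have : 0 < y := hν.trans hy
      positivity
  have := monotone self_mem_Ici hx hx
  simp only [besselPhase_self hν, sub_self, sqrt_zero] at this
  linarith

end PhaseGrowth

section BesselEquation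

/-- `f`, with derivative `f'`, solves the Bessel equation `x² f'' + x f' + (x² - ν²) f = 0` of order
`ν` on `(0, ∞)`. -/
structure IsBesselSolution (ν : ℝ) (f f' : ℝ → ℝ) : Prop where
  hasDerivAt : ∀ x, 0 < x → HasDerivAt f (f' x) x
  hasDerivAt_deriv : ∀ x, 0 < x →
    HasDerivAt f' (-1 / x * f' x + (ν ^ 2 - x ^ 2) / x ^ 2 * f x) x

/-- The Bessel function of the second kind, as a component of the Hankel function. -/
noncomputable def besselY (ν x : ℝ) : ℝ := -π⁻¹ * (hankel 0 ν x).re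

lemma isBesselSolution_hankel (ν : ℝ) (L : ℂ →L[ℝ] ℝ) :
    IsBesselSolution ν (fun x => L (hankel 0 ν x)) (fun x => L (hankel 1 ν x)) where
  hasDerivAt _ hx := L.hasFDerivAt.comp_hasDerivAt _ (hasDerivAt_hankel 0 ν hx)
  hasDerivAt_deriv x hx := by
    refine (L.hasFDerivAt.comp_hasDerivAt _ (hasDerivAt_hankel 1 ν hx)).congr_deriv ?_
    rw [hankel_two ν hx, ← Complex.real_smul, ← Complex.real_smul, map_add, map_smul, map_smul,
      smul_eq_mul, smul_eq_mul]

lemma besselJ_eq_im_hankel (ν x : ℝ) : besselJ ν x = π⁻¹ * (hankel 0 ν x).im := by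
  rw [hankel_zero_im, inv_mul_cancel_left₀ pi_ne_zero]

lemma exists_isBesselSolution_besselJ (ν : ℝ) : ∃ J', IsBesselSolution ν (besselJ ν) J' := by
  rw [funext (besselJ_eq_im_hankel ν)]
  exact ⟨_, isBesselSolution_hankel ν (π⁻¹ • Complex.imCLM)⟩

lemma exists_isBesselSolution_besselY (ν : ℝ) : ∃ Y', IsBesselSolution ν (besselY ν) Y' :=
  ⟨_, isBesselSolution_hankel ν (-π⁻¹ • Complex.reCLM)⟩

namespace IsBesselSolution

variable {ν : ℝ} {f f' g g' : ℝ → ℝ}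

lemma exists_wronskian_eq (hf : IsBesselSolution ν f f') (hg : IsBesselSolution ν g g') :
    ∃ c : ℝ, ∀ x, 0 < x → x * (f' x * g x - f x * g' x) = c := by
  have deriv_zero (x : ℝ) (hx : 0 < x) :
      HasDerivAt (fun x => x * (f' x * g x - f x * g' x)) 0 x := by
    refine ((hasDerivAt_id' x).fun_mul
      (((hf.hasDerivAt_deriv x hx).fun_mul (hg.hasDerivAt x hx)).fun_sub
        ((hf.hasDerivAt x hx).fun_mul (hg.hasDerivAt_deriv x hx)))).congr_deriv ?_
    field_simp
    ring
  exact ⟨_, fun x hx => isOpen_Ioi.is_const_of_deriv_eq_zero isPreconnected_Ioi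
    (fun y hy => (deriv_zero y hy).differentiableAt.differentiableWithinAt)
    (fun y hy => (deriv_zero y hy).deriv) hx (mem_Ioi.mpr one_pos)⟩

lemma exists_pos_div_sub_div_eq (hf : IsBesselSolution ν f f') (hg : IsBesselSolution ν g g')
    {c : ℝ} (hc : ∀ x, 0 < x → x * (f' x * g x - f x * g' x) = c) {a b : ℝ} (ha : 0 < a)
    (hab : a < b) (hg₀ : ∀ x ∈ Icc a b, g x ≠ 0) :
    ∃ r, 0 < r ∧ f b / g b - f a / g a = c * r := by
  have deriv_div (x : ℝ) (hx : x ∈ Icc a b) :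
      HasDerivAt (fun x => f x / g x) (c / (x * g x ^ 2)) x := by
    have hx₀ : 0 < x := ha.trans_le hx.1
    refine ((hf.hasDerivAt x hx₀).fun_div (hg.hasDerivAt x hx₀) (hg₀ x hx)).congr_deriv ?_
    rw [← hc x hx₀]
    field_simp
  obtain ⟨t, ht, slope_eq⟩ := exists_hasDerivAt_eq_slope _ _ hab
    (fun x hx => (deriv_div x hx).continuousAt.continuousWithinAt)
    (fun x hx => deriv_div x (Ioo_subset_Icc_self hx))
  have ht₀ : 0 < t := ha.trans ht.1
  have := hg₀ t (Ioo_subset_Icc_self ht)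
  refine ⟨(b - a) / (t * g t ^ 2), by have := sub_pos.mpr hab; positivity, ?_⟩
  rw [eq_div_iff (sub_pos.mpr hab).ne'] at slope_eq
  rw [← slope_eq]
  ring

lemma hasDerivAt_mul_deriv (hf : IsBesselSolution ν f f') {x : ℝ} (hx : 0 < x) :
    HasDerivAt (fun x => x * f' x) ((ν ^ 2 - x ^ 2) / x * f x) x := by
  refine ((hasDerivAt_id' x).fun_mul (hf.hasDerivAt_deriv x hx)).congr_deriv ?_
  field_simp
  ring

-- On `(0, ν]` the equation is not oscillatory: `f · x f'` increases, so up to a zero of `f` it is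
-- negative, and `f²` decreases.
lemma eq_zero_of_tendsto_zero (hf : IsBesselSolution ν f f')
    (limit : Tendsto f (𝓝[>] 0) (𝓝 0)) {x₀ : ℝ} (hx₀ : x₀ ≤ ν) (zero : f x₀ = 0) :
    ∀ x ∈ Ioc 0 x₀, f x = 0 := by
  have mul_deriv_monotone : MonotoneOn (fun x => f x * (x * f' x)) (Ioc 0 x₀) := by
    have deriv_mul (x : ℝ) (hx : x ∈ Ioc 0 x₀) :=
      (hf.hasDerivAt x hx.1).fun_mul (hf.hasDerivAt_mul_deriv hx.1)
    refine monotoneOn_of_hasDerivWithinAt_nonneg (convex_Ioc 0 x₀)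
      (fun x hx => (deriv_mul x hx).continuousAt.continuousWithinAt)
      (fun x hx => (deriv_mul x (interior_subset hx)).hasDerivWithinAt) fun x hx => ?_
    obtain ⟨x_pos, x_le⟩ := interior_subset hx
    have coefficient_nonneg : 0 ≤ (ν ^ 2 - x ^ 2) / x :=
      div_nonneg (sub_nonneg.mpr (by gcongr; exact x_le.trans hx₀)) x_pos.le
    calc 0 ≤ x * f' x ^ 2 + (ν ^ 2 - x ^ 2) / x * f x ^ 2 := by positivity
      _ = _ := by ring
  have mul_deriv_nonpos (x : ℝ) (hx : x ∈ Ioc 0 x₀) : f x * f' x ≤ 0 := by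
    have := mul_deriv_monotone hx ⟨hx.1.trans_le hx.2, le_rfl⟩ hx.2
    simp only [zero, zero_mul] at this
    nlinarith [hx.1]
  have sq_antitone : AntitoneOn (fun x => f x ^ 2) (Ioc 0 x₀) := by
    have deriv_sq (x : ℝ) (hx : x ∈ Ioc 0 x₀) := (hf.hasDerivAt x hx.1).fun_pow 2
    refine antitoneOn_of_hasDerivWithinAt_nonpos (convex_Ioc 0 x₀)
      (fun x hx => (deriv_sq x hx).continuousAt.continuousWithinAt)
      (fun x hx => (deriv_sq x (interior_subset hx)).hasDerivWithinAt) fun x hx => ?_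
    have := mul_deriv_nonpos x (interior_subset hx)
    rw [Nat.cast_ofNat, pow_one]
    linarith
  intro x hx
  have le_limit : f x ^ 2 ≤ 0 ^ 2 := ge_of_tendsto (limit.pow 2) (by
    filter_upwards [Ioc_mem_nhdsGT hx.1] with y hy
    exact sq_antitone ⟨hy.1, hy.2.trans hx.2⟩ hx hy.2)
  nlinarith

lemma wronskian_eq_zero_of_eq_zero (hf : IsBesselSolution ν f f') {x₀ : ℝ} (hx₀ : 0 < x₀)
    (zero : ∀ x ∈ Ioc 0 x₀, f x = 0) {c : ℝ}
    (hc : ∀ x, 0 < x → x * (f' x * g x - f x * g' x) = c) : c = 0 := by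
  have half_mem : x₀ / 2 ∈ Ioo 0 x₀ := ⟨half_pos hx₀, half_lt_self hx₀⟩
  have eventually_zero : f =ᶠ[𝓝 (x₀ / 2)] fun _ => 0 := by
    filter_upwards [Ioo_mem_nhds half_mem.1 half_mem.2] with x hx
    exact zero x (Ioo_subset_Ioc_self hx)
  have deriv_zero : f' (x₀ / 2) = 0 :=
    (hf.hasDerivAt _ half_mem.1).unique
      ((hasDerivAt_const _ 0).congr_of_eventuallyEq eventually_zero)
  rw [← hc _ half_mem.1, deriv_zero, eventually_zero.self_of_nhds]
  ring

end IsBesselSolution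

lemma tendsto_besselJ_nhdsGT_zero {ν : ℝ} (hν : 0 < ν) : Tendsto (besselJ ν) (𝓝[>] 0) (𝓝 0) := by
  have limit_cos : Tendsto (fun x => ∫ θ in (0 : ℝ)..π, cos (x * sin θ - ν * θ)) (𝓝[>] 0)
      (𝓝 (sin (ν * π) / ν)) := by
    have continuous_integral : Continuous fun x => ∫ θ in (0 : ℝ)..π, cos (x * sin θ - ν * θ) :=
      intervalIntegral.continuous_parametric_intervalIntegral_of_continuous' (by fun_prop) 0 π
    have value_zero : ∫ θ in (0 : ℝ)..π, cos (0 * sin θ - ν * θ) = sin (ν * π) / ν := by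
      simp [intervalIntegral.integral_comp_mul_left _ hν.ne', div_eq_inv_mul]
    rw [← value_zero]
    exact (continuous_integral.tendsto 0).mono_left nhdsWithin_le_nhds
  have limit_exp : Tendsto (fun x => ∫ t in Ioi (0 : ℝ), exp (-x * sinh t - ν * t)) (𝓝[>] 0)
      (𝓝 (1 / ν)) := by
    have value_zero : ∫ t in Ioi (0 : ℝ), exp (-ν * t) = 1 / ν := by
      rw [integral_exp_mul_Ioi (neg_neg_of_pos hν) 0]
      simp
    rw [← value_zero]
    refine tendsto_integral_filter_of_dominated_convergence (fun t => exp (-ν * t))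
      (.of_forall fun x => (by fun_prop)) ?_ (integrableOn_exp_mul_Ioi (neg_neg_of_pos hν) 0) ?_
    · filter_upwards [self_mem_nhdsWithin] with x hx
      filter_upwards [ae_restrict_mem measurableSet_Ioi] with t ht
      rw [norm_eq_abs, abs_exp, exp_le_exp]
      linarith [mul_pos (mem_Ioi.mp hx) (sinh_pos_iff.mpr ht)]
    · refine .of_forall fun t => ?_
      have continuous_integrand : Continuous fun x => exp (-x * sinh t - ν * t) := by fun_prop
      simpa using (continuous_integrand.tendsto 0).mono_left nhdsWithin_le_nhds
  have limit := (limit_cos.const_mul (1 / π)).sub (limit_exp.const_mul (sin (ν * π) / π))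
  rwa [show 1 / π * (sin (ν * π) / ν) - sin (ν * π) / π * (1 / ν) = 0 by ring] at limit

end BesselEquation

section ZeroCounting

/-- The number `m` of the interval `((m - 1) π, m π]` which contains the phase at `x`. It turns out
that each such interval of phases contains exactly one zero of `J_ν`. -/
noncomputable def phaseWindow (ν x : ℝ) : ℕ := ⌈besselPhase ν x / π⌉₊

variable {ν x : ℝ}

lemma exists_besselJ_besselY_eq (hν : 0 < ν) (hx : ν < x) : ∃ a b : ℝ, 0 < a ∧ 0 < b ∧
    besselJ ν x = a * sin (besselPhase ν x) + b * cos (besselPhase ν x) ∧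
    besselY ν x = b * sin (besselPhase ν x) - a * cos (besselPhase ν x) := by
  obtain ⟨a, b, ha, hb, hankel_eq⟩ := exists_hankel_zero_eq_exp_besselPhase_mul hν hx
  refine ⟨π⁻¹ * a, π⁻¹ * b, by positivity, by positivity, ?_, ?_⟩
  · rw [besselJ_eq_im_hankel, hankel_eq, Complex.mul_im, Complex.exp_ofReal_mul_I_re,
      Complex.exp_ofReal_mul_I_im]
    simp
    ring
  · rw [besselY, hankel_eq, Complex.mul_re, Complex.exp_ofReal_mul_I_re,
      Complex.exp_ofReal_mul_I_im]
    simp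
    ring

lemma exists_neg_one_pow_mul_besselJ_besselY_eq (hν : 0 < ν) (hx : ν < x) (m : ℕ) :
    ∃ a b : ℝ, 0 < a ∧ 0 < b ∧
    (-1) ^ m * besselJ ν x
      = b * cos (m * π - besselPhase ν x) - a * sin (m * π - besselPhase ν x) ∧
    (-1) ^ m * besselY ν x
      = -(a * cos (m * π - besselPhase ν x) + b * sin (m * π - besselPhase ν x)) := by
  obtain ⟨a, b, ha, hb, J_eq, Y_eq⟩ := exists_besselJ_besselY_eq hν hx
  refine ⟨a, b, ha, hb, ?_, ?_⟩
  · rw [J_eq, sin_nat_mul_pi_sub, cos_nat_mul_pi_sub]; ring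
  · rw [Y_eq, sin_nat_mul_pi_sub, cos_nat_mul_pi_sub]; ring

lemma neg_one_pow_mul_besselY_neg (hν : 0 < ν) (hx : ν < x) {m : ℕ}
    (hm : besselPhase ν x ∈ Icc (((m : ℝ) - 1 / 2) * π) (m * π)) :
    (-1) ^ m * besselY ν x < 0 := by
  obtain ⟨a, b, ha, hb, -, Y_eq⟩ := exists_neg_one_pow_mul_besselJ_besselY_eq hν hx m
  rw [Y_eq, neg_neg_iff_pos]
  have cos_nonneg : 0 ≤ cos (m * π - besselPhase ν x) :=
    cos_nonneg_of_mem_Icc ⟨by linarith [hm.2, pi_pos], by linarith [hm.1]⟩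
  rcases hm.2.eq_or_lt with phase_eq | phase_lt
  · simpa [phase_eq] using ha
  · have := sin_pos_of_pos_of_lt_pi (sub_pos.mpr phase_lt) (by linarith [hm.1, pi_pos])
    positivity

lemma besselY_ne_zero (hν : 0 < ν) (hx : ν < x) {m : ℕ}
    (hm : besselPhase ν x ∈ Icc (((m : ℝ) - 1 / 2) * π) (m * π)) : besselY ν x ≠ 0 :=
  right_ne_zero_of_mul (neg_one_pow_mul_besselY_neg hν hx hm).ne

lemma neg_one_pow_mul_besselJ_neg (hν : 0 < ν) (hx : ν < x) {m : ℕ}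
    (hm : besselPhase ν x ∈ Ioc (((m : ℝ) - 1) * π) (((m : ℝ) - 1 / 2) * π)) :
    (-1) ^ m * besselJ ν x < 0 := by
  obtain ⟨a, b, ha, hb, J_eq, -⟩ := exists_neg_one_pow_mul_besselJ_besselY_eq hν hx m
  have sin_pos : 0 < sin (m * π - besselPhase ν x) :=
    sin_pos_of_pos_of_lt_pi (by linarith [hm.2, pi_pos]) (by linarith [hm.1])
  have cos_nonpos : cos (m * π - besselPhase ν x) ≤ 0 :=
    cos_nonpos_of_pi_div_two_le_of_le (by linarith [hm.2]) (by linarith [hm.1, pi_pos])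
  rw [J_eq]
  linarith [mul_pos ha sin_pos, mul_nonpos_of_nonneg_of_nonpos hb.le cos_nonpos]

lemma neg_one_pow_mul_besselJ_pos (hν : 0 < ν) (hx : ν < x) {m : ℕ}
    (hm : besselPhase ν x = m * π) : 0 < (-1) ^ m * besselJ ν x := by
  obtain ⟨a, b, -, hb, J_eq, -⟩ := exists_neg_one_pow_mul_besselJ_besselY_eq hν hx m
  simpa [J_eq, hm] using hb

lemma besselY_ne_zero_on_Icc (hν : 0 < ν) {a b : ℝ} (ha : ν < a) {m : ℕ}
    (phase_a : ((m : ℝ) - 1 / 2) * π ≤ besselPhase ν a) (phase_b : besselPhase ν b ≤ m * π) :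
    ∀ x ∈ Icc a b, besselY ν x ≠ 0 := fun x hx => by
  have phase_mono := (strictMonoOn_besselPhase hν).monotoneOn
  have hνx : ν < x := ha.trans_le hx.1
  exact besselY_ne_zero hν hνx ⟨phase_a.trans (phase_mono ha.le hνx.le hx.1),
    (phase_mono hνx.le (hνx.le.trans hx.2) hx.2).trans phase_b⟩

-- Otherwise `J / Y` would be constant on a stretch where it changes sign.
lemma wronskian_besselJ_besselY_ne_zero (hν : 0 < ν) {J' Y' : ℝ → ℝ}
    (hJ : IsBesselSolution ν (besselJ ν) J') (hY : IsBesselSolution ν (besselY ν) Y') {c : ℝ}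
    (hc : ∀ x, 0 < x → x * (J' x * besselY ν x - besselJ ν x * Y' x) = c) : c ≠ 0 := by
  rintro rfl
  obtain ⟨a, ha, phase_a⟩ := exists_besselPhase_eq hν (half_pos pi_pos)
  obtain ⟨b, hb, phase_b⟩ := exists_besselPhase_eq hν pi_pos
  have hab : a < b := by
    rw [← (strictMonoOn_besselPhase hν).lt_iff_lt ha.le hb.le, phase_a, phase_b]
    exact half_lt_self pi_pos
  obtain ⟨r, -, ratio_eq⟩ := hJ.exists_pos_div_sub_div_eq hY hc (hν.trans ha) hab
    (besselY_ne_zero_on_Icc hν ha (m := 1) (by norm_num [phase_a, div_eq_inv_mul])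
      (by simp [phase_b]))
  have Y_a := neg_one_pow_mul_besselY_neg hν ha (m := 1)
    ⟨by norm_num [phase_a, div_eq_inv_mul], by norm_num [phase_a, pi_nonneg]⟩
  have Y_b := neg_one_pow_mul_besselY_neg hν hb (m := 1)
    ⟨by norm_num [phase_b, pi_pos], by norm_num [phase_b]⟩
  have J_a := neg_one_pow_mul_besselJ_neg hν ha (m := 1)
    ⟨by norm_num [phase_a, pi_pos], by norm_num [phase_a, div_eq_inv_mul]⟩
  have J_b := neg_one_pow_mul_besselJ_pos hν hb (m := 1) (by simp [phase_b])
  simp only [pow_one, neg_one_mul, neg_pos, neg_lt_zero] at Y_a Y_b J_a J_b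
  linarith [div_pos J_a Y_a, div_neg_of_neg_of_pos J_b Y_b]

lemma lt_of_besselJ_eq_zero (hν : 0 < ν) (hx : 0 < x) (zero : besselJ ν x = 0) : ν < x := by
  obtain ⟨J', hJ⟩ := exists_isBesselSolution_besselJ ν
  obtain ⟨Y', hY⟩ := exists_isBesselSolution_besselY ν
  obtain ⟨c, hc⟩ := hJ.exists_wronskian_eq hY
  by_contra! hxν
  exact wronskian_besselJ_besselY_ne_zero hν hJ hY hc (hJ.wronskian_eq_zero_of_eq_zero hx
    (hJ.eq_zero_of_tendsto_zero (tendsto_besselJ_nhdsGT_zero hν) hxν zero) hc)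

lemma phaseWindow_pos (hν : 0 < ν) (hx : ν < x) : 0 < phaseWindow ν x :=
  Nat.ceil_pos.mpr (div_pos (besselPhase_pos hν hx) pi_pos)

lemma phaseWindow_le (hν : 0 < ν) {y : ℝ} (hx : ν ≤ x) (hxy : x ≤ y) :
    phaseWindow ν x ≤ phaseWindow ν y := by
  refine Nat.ceil_le_ceil (div_le_div_of_nonneg_right ?_ pi_nonneg)
  exact (strictMonoOn_besselPhase hν).monotoneOn hx (hx.trans hxy) hxy

lemma besselPhase_mem_Ioo_of_besselJ_eq_zero (hν : 0 < ν) (hx : ν < x)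
    (zero : besselJ ν x = 0) :
    besselPhase ν x ∈ Ioo (((phaseWindow ν x : ℝ) - 1 / 2) * π) (phaseWindow ν x * π) := by
  have phase_le : besselPhase ν x ≤ phaseWindow ν x * π :=
    (div_le_iff₀ pi_pos).mp (Nat.le_ceil _)
  have lt_phase : ((phaseWindow ν x : ℝ) - 1) * π < besselPhase ν x :=
    (lt_div_iff₀ pi_pos).mp (sub_lt_iff_lt_add.mpr (Nat.ceil_lt_add_one
      (div_nonneg (besselPhase_pos hν hx).le pi_nonneg)))
  constructor
  · by_contra! phase_le_mid
    simpa [zero] using neg_one_pow_mul_besselJ_neg hν hx ⟨lt_phase, phase_le_mid⟩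
  · refine phase_le.lt_of_ne fun phase_eq => ?_
    simpa [zero] using neg_one_pow_mul_besselJ_pos hν hx phase_eq

lemma phaseWindow_ne_of_besselJ_eq_zero (hν : 0 < ν) {y : ℝ} (hx : ν < x) (hxy : x < y)
    (zero_x : besselJ ν x = 0) (zero_y : besselJ ν y = 0) :
    phaseWindow ν x ≠ phaseWindow ν y := by
  intro window_eq
  obtain ⟨J', hJ⟩ := exists_isBesselSolution_besselJ ν
  obtain ⟨Y', hY⟩ := exists_isBesselSolution_besselY ν
  obtain ⟨c, hc⟩ := hJ.exists_wronskian_eq hY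
  have phase_y := (besselPhase_mem_Ioo_of_besselJ_eq_zero hν (hx.trans hxy) zero_y).2.le
  rw [← window_eq] at phase_y
  obtain ⟨r, hr, ratio_eq⟩ := hJ.exists_pos_div_sub_div_eq hY hc (hν.trans hx) hxy
    (besselY_ne_zero_on_Icc hν hx (besselPhase_mem_Ioo_of_besselJ_eq_zero hν hx zero_x).1.le
      phase_y)
  rw [zero_x, zero_y, zero_div, zero_div, sub_self] at ratio_eq
  exact mul_ne_zero (wronskian_besselJ_besselY_ne_zero hν hJ hY hc) hr.ne' ratio_eq.symm

lemma exists_besselJ_eq_zero_of_phaseWindow (hν : 0 < ν) {m : ℕ} (hm : 1 ≤ m) :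
    ∃ x, ν < x ∧ besselJ ν x = 0 ∧ phaseWindow ν x = m := by
  have one_le_m : (1 : ℝ) ≤ m := by exact_mod_cast hm
  obtain ⟨J', hJ⟩ := exists_isBesselSolution_besselJ ν
  obtain ⟨a, ha, phase_a⟩ := exists_besselPhase_eq hν
    (mul_pos (by linarith) pi_pos : 0 < ((m : ℝ) - 1 / 2) * π)
  obtain ⟨b, hb, phase_b⟩ := exists_besselPhase_eq hν (by positivity : 0 < (m : ℝ) * π)
  have phase_strictMono := strictMonoOn_besselPhase hν
  have hab : a ≤ b := by
    rw [← phase_strictMono.le_iff_le ha.le hb.le, phase_a, phase_b]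
    linarith [pi_pos]
  have continuousOn_J : ContinuousOn (fun x => (-1) ^ m * besselJ ν x) (Icc a b) := fun x hx =>
    ((hJ.hasDerivAt x (by linarith [hx.1])).const_mul _).continuousAt.continuousWithinAt
  obtain ⟨x, hx, zero⟩ := intermediate_value_Icc hab continuousOn_J
    ⟨(neg_one_pow_mul_besselJ_neg hν ha ⟨by linarith [pi_pos], phase_a.le⟩).le,
      (neg_one_pow_mul_besselJ_pos hν hb phase_b).le⟩
  have hνx : ν < x := ha.trans_le hx.1
  have phase_ge := phase_strictMono.monotoneOn ha.le hνx.le hx.1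
  have phase_le := phase_strictMono.monotoneOn hνx.le hb.le hx.2
  refine ⟨x, hνx, (mul_eq_zero.mp zero).resolve_left (by simp), ?_⟩
  rw [phaseWindow, Nat.ceil_eq_iff (by omega), lt_div_iff₀ pi_pos, div_le_iff₀ pi_pos,
    Nat.cast_sub hm, Nat.cast_one]
  exact ⟨by linarith [pi_pos], phase_le.trans_eq phase_b⟩

lemma image_phaseWindow_zeros_lt (hν : 0 < ν) {j : ℝ} (hj : ν < j) (zero : besselJ ν j = 0) :
    phaseWindow ν '' {x | 0 < x ∧ x < j ∧ besselJ ν x = 0} = Ico 1 (phaseWindow ν j) := by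
  ext m
  constructor
  · rintro ⟨x, ⟨hx₀, hxj, zero_x⟩, rfl⟩
    have hνx := lt_of_besselJ_eq_zero hν hx₀ zero_x
    exact ⟨phaseWindow_pos hν hνx, (phaseWindow_le hν hνx.le hxj.le).lt_of_ne
      (phaseWindow_ne_of_besselJ_eq_zero hν hνx hxj zero_x zero)⟩
  · rintro ⟨hm, hmj⟩
    obtain ⟨x, hνx, zero_x, rfl⟩ := exists_besselJ_eq_zero_of_phaseWindow hν hm
    refine ⟨x, ⟨hν.trans hνx, ?_, zero_x⟩, rfl⟩
    by_contra! hjx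
    exact hmj.not_ge (phaseWindow_le hν hj.le hjx)

lemma injOn_phaseWindow_zeros (hν : 0 < ν) :
    InjOn (phaseWindow ν) {x | 0 < x ∧ besselJ ν x = 0} := by
  rintro x ⟨hx₀, zero_x⟩ y ⟨hy₀, zero_y⟩ window_eq
  rcases lt_trichotomy x y with hxy | rfl | hyx
  · exact absurd window_eq (phaseWindow_ne_of_besselJ_eq_zero hν
      (lt_of_besselJ_eq_zero hν hx₀ zero_x) hxy zero_x zero_y)
  · rfl
  · exact absurd window_eq.symm (phaseWindow_ne_of_besselJ_eq_zero hν
      (lt_of_besselJ_eq_zero hν hy₀ zero_y) hyx zero_y zero_x)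

theorem phaseWindow_eq_of_isKthZero (hν : 0 < ν) {k : ℕ} (hk : 1 ≤ k) {j : ℝ}
    (hj : IsKthZero ν k j) : phaseWindow ν j = k := by
  obtain ⟨hj₀, zero, card_eq⟩ := hj
  have hνj := lt_of_besselJ_eq_zero hν hj₀ zero
  have injOn : InjOn (phaseWindow ν) {x | 0 < x ∧ x < j ∧ besselJ ν x = 0} := by
    refine (injOn_phaseWindow_zeros hν).mono fun x hx => ?_
    exact ⟨hx.1, hx.2.2⟩
  have card_image := injOn.ncard_image
  rw [image_phaseWindow_zeros_lt hν hνj zero, card_eq, ← Finset.coe_Ico, ncard_coe_finset,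
    Nat.card_Ico] at card_image
  have := phaseWindow_pos hν hνj
  omega

end ZeroCounting

section HankelAsymptotics

lemma one_add_sq_div_two_le_cosh (u : ℝ) : 1 + u ^ 2 / 2 ≤ cosh u := by
  have le_sinh : |u| / 2 ≤ sinh (|u| / 2) := self_le_sinh_iff.mpr (by positivity)
  have cosh_double : cosh u = 1 + 2 * sinh (|u| / 2) ^ 2 := by
    have := cosh_two_mul (|u| / 2)
    rw [mul_div_cancel₀ |u| two_ne_zero, cosh_abs, cosh_sq] at this
    linarith
  have := pow_le_pow_left₀ (by positivity) le_sinh 2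
  rw [div_pow, sq_abs] at this
  linarith

lemma sq_div_two_le_sinh_sq_div_cosh (u : ℝ) : u ^ 2 / 2 ≤ sinh u ^ 2 / cosh u := by
  rw [le_div_iff₀ (cosh_pos u), sinh_sq]
  nlinarith [one_add_sq_div_two_le_cosh u, one_le_cosh u, sq_nonneg u]

/-- The height at abscissa `u` of the curve on which `sinh (u + v i)` has imaginary part `1`, the
limit as `x → ∞` of the steepest descent contour of `e^{x sinh w - ν w}`. -/
noncomputable def saddleHeight (u : ℝ) : ℝ := π / 2 + arctan (sinh u)

lemma sqrt_one_add_sinh_sq (u : ℝ) : √(1 + sinh u ^ 2) = cosh u := by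
  rw [← cosh_sq', sqrt_sq (cosh_pos u).le]

lemma sin_saddleHeight (u : ℝ) : sin (saddleHeight u) = 1 / cosh u := by
  rw [saddleHeight, add_comm, sin_add_pi_div_two, cos_arctan, sqrt_one_add_sinh_sq]

lemma cos_saddleHeight (u : ℝ) : cos (saddleHeight u) = -(sinh u / cosh u) := by
  rw [saddleHeight, add_comm, cos_add_pi_div_two, sin_arctan, sqrt_one_add_sinh_sq]

lemma hasDerivAt_saddleHeight (u : ℝ) : HasDerivAt saddleHeight (1 / cosh u) u := by
  refine ((hasDerivAt_sinh u).arctan.const_add (π / 2)).congr_deriv ?_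
  rw [← cosh_sq']
  field_simp [(cosh_pos u).ne']

lemma continuous_saddleHeight : Continuous saddleHeight :=
  continuous_iff_continuousAt.mpr fun u => (hasDerivAt_saddleHeight u).continuousAt

lemma eventually_saddleHeight_mem_atTop : ∀ᶠ u in atTop, saddleHeight u ∈ Icc (2 * π / 3) π := by
  have tendsto_arctan := tendsto_nhdsWithin_iff.mp
    (tendsto_arctan_atTop.comp sinhOrderIso.tendsto_atTop)
  filter_upwards [tendsto_arctan.1.eventually (Ioi_mem_nhds (show π / 6 < π / 2 by
    linarith [pi_pos])), tendsto_arctan.2] with u (lower : π / 6 < arctan (sinh u))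
    (upper : arctan (sinh u) < π / 2)
  constructor <;> unfold saddleHeight <;> linarith

lemma saddleHeight_neg (u : ℝ) : saddleHeight (-u) = π - saddleHeight u := by
  rw [saddleHeight, saddleHeight, sinh_neg, arctan_neg]
  ring

lemma eventually_saddleHeight_neg_mem_atTop :
    ∀ᶠ u in atTop, saddleHeight (-u) ∈ Icc 0 (π / 3) := by
  filter_upwards [eventually_saddleHeight_mem_atTop] with u hu
  rw [saddleHeight_neg]
  constructor <;> linarith [hu.1, hu.2]

/-- The integrand `e^{x sinh w - ν w} dw` along the curve of height `saddleHeight`, with the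
constant oscillating factor `e^{ix}` removed. -/
noncomputable def saddleIntegrand (ν x u : ℝ) : ℂ :=
  exp (-(x * (sinh u ^ 2 / cosh u)) - ν * u) * Complex.exp (-(ν * saddleHeight u * I)) *
    (1 + I / cosh u)

lemma hankelIntegrand_saddleHeight (ν x u : ℝ) :
    hankelIntegrand ν x (u + saddleHeight u * I) * (1 + I / cosh u)
      = Complex.exp (x * I) * saddleIntegrand ν x u := by
  have real_part : x * sinh u * cos (saddleHeight u) - ν * u
      = -(x * (sinh u ^ 2 / cosh u)) - ν * u := by
    rw [cos_saddleHeight]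
    ring
  have imaginary_part : x * cosh u * sin (saddleHeight u) - ν * saddleHeight u
      = x - ν * saddleHeight u := by
    rw [sin_saddleHeight]
    field_simp [(cosh_pos u).ne']
  have split_exp : Complex.exp (((x - ν * saddleHeight u : ℝ) : ℂ) * I)
      = Complex.exp (x * I) * Complex.exp (-(ν * saddleHeight u * I)) := by
    rw [← Complex.exp_add]
    push_cast
    ring_nf
  rw [hankelIntegrand_add_mul_I, real_part, imaginary_part, split_exp, saddleIntegrand]
  ring

lemma continuous_saddleIntegrand (ν x : ℝ) : Continuous (saddleIntegrand ν x) := by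
  have cosh_ne (u : ℝ) : cosh u ≠ 0 := (cosh_pos u).ne'
  have : Continuous fun u => -(x * (sinh u ^ 2 / cosh u)) - ν * u :=
    ((continuous_sinh.pow 2).div continuous_cosh cosh_ne).const_mul x |>.neg.sub (by fun_prop)
  have : Continuous fun u : ℝ => (1 + I / cosh u : ℂ) :=
    (continuous_const.div (Complex.continuous_ofReal.comp continuous_cosh)
      fun u => Complex.ofReal_ne_zero.mpr (cosh_ne u)).const_add 1
  have := continuous_saddleHeight
  unfold saddleIntegrand
  fun_prop

lemma norm_saddleIntegrand_le (ν : ℝ) {x : ℝ} (hx : 0 < x) (u : ℝ) :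
    ‖saddleIntegrand ν x u‖ ≤ 2 * exp (ν ^ 2 / x) * exp (-(x / 4) * u ^ 2) := by
  have norm_factor : ‖(1 + I / cosh u : ℂ)‖ ≤ 2 := by
    calc ‖(1 + I / cosh u : ℂ)‖ ≤ ‖(1 : ℂ)‖ + ‖I / cosh u‖ := norm_add_le _ _
      _ = 1 + 1 / cosh u := by
        rw [norm_one, norm_div, Complex.norm_I, Complex.norm_of_nonneg (cosh_pos u).le]
      _ ≤ 2 := by linarith [div_le_self zero_le_one (one_le_cosh u)]
  have norm_phase : ‖Complex.exp (-(ν * saddleHeight u * I))‖ = 1 := by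
    simpa using Complex.norm_exp_ofReal_mul_I (-(ν * saddleHeight u))
  have exponent_le : -(x * (sinh u ^ 2 / cosh u)) - ν * u ≤ ν ^ 2 / x + -(x / 4) * u ^ 2 := by
    have gaussian := mul_le_mul_of_nonneg_left (sq_div_two_le_sinh_sq_div_cosh u) hx.le
    have complete_square : ν ^ 2 / x + x / 4 * u ^ 2 + ν * u = (ν + x / 2 * u) ^ 2 / x := by
      field_simp
      ring
    have : 0 ≤ (ν + x / 2 * u) ^ 2 / x := by positivity
    linarith
  rw [saddleIntegrand, norm_mul, norm_mul, norm_phase, mul_one,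
    Complex.norm_of_nonneg (exp_pos _).le, mul_comm, mul_assoc, ← exp_add]
  gcongr

lemma integrable_saddleIntegrand (ν : ℝ) {x : ℝ} (hx : 0 < x) :
    Integrable (saddleIntegrand ν x) :=
  ((integrable_exp_neg_mul_sq (by positivity : 0 < x / 4)).const_mul _).mono'
    (continuous_saddleIntegrand ν x).aestronglyMeasurable
    (Eventually.of_forall (norm_saddleIntegrand_le ν hx))

lemma hankel_zero_eq_integral_saddleIntegrand (ν : ℝ) {x : ℝ} (hx : 0 < x) :
    hankel 0 ν x = Complex.exp (x * I) * ∫ u, saddleIntegrand ν x u := by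
  obtain ⟨F, hF⟩ := exists_primitive_hankelIntegrand ν x
  have deriv_path (u : ℝ) : HasDerivAt (fun u : ℝ => (u + saddleHeight u * I : ℂ))
      (1 + I / cosh u) u := by
    refine ((hasDerivAt_id' u).ofReal_comp.fun_add
      ((hasDerivAt_saddleHeight u).ofReal_comp.mul_const I)).congr_deriv ?_
    rw [Complex.ofReal_one, Complex.ofReal_div, Complex.ofReal_one, div_mul_eq_mul_div, one_mul]
  have deriv_primitive (u : ℝ) : HasDerivAt (fun u : ℝ => F (u + saddleHeight u * I))
      (Complex.exp (x * I) * saddleIntegrand ν x u) u := by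
    rw [← hankelIntegrand_saddleHeight]
    exact (hF _).comp u (deriv_path u)
  have left_limit : Tendsto (fun u : ℝ => F (u + saddleHeight u * I)) atBot
      (𝓝 (F 0 - sinhMoment 0 ν x)) := by
    simpa [Function.comp_def] using (tendsto_primitive_left hx hF tendsto_id
      eventually_saddleHeight_neg_mem_atTop).comp tendsto_neg_atBot_atTop
  have right_limit := tendsto_primitive_right hx hF tendsto_id eventually_saddleHeight_mem_atTop
  rw [← integral_const_mul, integral_of_hasDerivAt_of_tendsto deriv_primitive
    ((integrable_saddleIntegrand ν hx).const_mul _) left_limit right_limit]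
  ring

lemma tendsto_sqrt_mul_sinh_div_sqrt (s : ℝ) :
    Tendsto (fun x : ℝ => √x * sinh (s / √x)) atTop (𝓝 s) := by
  have deriv_zero : HasDerivAt (fun t => sinh (s * t)) s 0 := by
    simpa using ((hasDerivAt_id' (0 : ℝ)).const_mul s).sinh
  refine (deriv_zero.tendsto_slope_zero_right.comp
    (tendsto_inv_atTop_nhdsGT_zero.comp tendsto_sqrt_atTop)).congr fun x => ?_
  simp [div_eq_mul_inv]

lemma tendsto_saddleIntegrand_div_sqrt (ν s : ℝ) :
    Tendsto (fun x : ℝ => saddleIntegrand ν x (s / √x)) atTop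
      (𝓝 (exp (-1 * s ^ 2) * (Complex.exp (-(ν * (π / 2) * I)) * (1 + I)))) := by
  have arg_tendsto : Tendsto (fun x : ℝ => s / √x) atTop (𝓝 0) :=
    tendsto_const_nhds.div_atTop tendsto_sqrt_atTop
  have cosh_tendsto : Tendsto (fun x : ℝ => cosh (s / √x)) atTop (𝓝 1) := by
    simpa [Function.comp_def] using (continuous_cosh.tendsto 0).comp arg_tendsto
  have height_tendsto : Tendsto (fun x : ℝ => saddleHeight (s / √x)) atTop (𝓝 (π / 2)) := by
    simpa [saddleHeight, Function.comp_def] using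
      (continuous_saddleHeight.tendsto 0).comp arg_tendsto
  have exponent_tendsto : Tendsto (fun x : ℝ =>
      -(x * (sinh (s / √x) ^ 2 / cosh (s / √x))) - ν * (s / √x)) atTop (𝓝 (-1 * s ^ 2)) := by
    have := ((((tendsto_sqrt_mul_sinh_div_sqrt s).pow 2).div cosh_tendsto one_ne_zero).neg).sub
      (arg_tendsto.const_mul ν)
    rw [div_one, mul_zero, sub_zero, ← neg_one_mul] at this
    refine this.congr' ?_
    filter_upwards [eventually_ge_atTop 0] with x hx
    rw [Pi.div_apply, mul_pow, sq_sqrt hx, mul_div_assoc]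
  have phase_tendsto : Tendsto (fun x : ℝ =>
      Complex.exp (-(ν * saddleHeight (s / √x) * I))) atTop
      (𝓝 (Complex.exp (-(ν * (π / 2) * I)))) := by
    simpa using ((height_tendsto.ofReal.const_mul (ν : ℂ)).mul_const I).neg.cexp
  have factor_tendsto : Tendsto (fun x : ℝ => (1 + I / cosh (s / √x) : ℂ)) atTop (𝓝 (1 + I)) := by
    simpa using (tendsto_const_nhds (x := I)).div cosh_tendsto.ofReal (by simp) |>.const_add 1
  simpa only [saddleIntegrand, mul_assoc] using
    exponent_tendsto.rexp.ofReal.mul (phase_tendsto.mul factor_tendsto)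

lemma sqrt_mul_integral_saddleIntegrand (ν : ℝ) {x : ℝ} (hx : 0 < x) :
    √x * ∫ u, saddleIntegrand ν x u = ∫ s, saddleIntegrand ν x (s / √x) := by
  rw [Measure.integral_comp_div, abs_of_pos (sqrt_pos.mpr hx), Complex.real_smul]

lemma tendsto_integral_saddleIntegrand_div_sqrt (ν : ℝ) :
    Tendsto (fun x : ℝ => ∫ s, saddleIntegrand ν x (s / √x)) atTop
      (𝓝 (√π * (Complex.exp (-(ν * (π / 2) * I)) * (1 + I)))) := by
  have gaussian_integral : ∫ s : ℝ, (exp (-1 * s ^ 2) : ℂ) *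
      (Complex.exp (-(ν * (π / 2) * I)) * (1 + I))
      = √π * (Complex.exp (-(ν * (π / 2) * I)) * (1 + I)) := by
    rw [integral_mul_const, integral_complex_ofReal, integral_gaussian, div_one]
  rw [← gaussian_integral]
  refine tendsto_integral_filter_of_dominated_convergence
    (fun s => 2 * exp (ν ^ 2) * exp (-(1 / 4) * s ^ 2)) ?_ ?_
    ((integrable_exp_neg_mul_sq (by norm_num)).const_mul _)
    (Eventually.of_forall (tendsto_saddleIntegrand_div_sqrt ν))
  · exact Eventually.of_forall fun x => ((continuous_saddleIntegrand ν x).comp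
      (continuous_id.div_const _)).aestronglyMeasurable
  · filter_upwards [eventually_ge_atTop 1] with x hx
    refine Eventually.of_forall fun s => (norm_saddleIntegrand_le ν (by positivity) _).trans ?_
    have : -(x / 4) * (s / √x) ^ 2 = -(1 / 4) * s ^ 2 := by
      rw [div_pow, sq_sqrt (by positivity)]
      field_simp
    rw [this]
    gcongr
    exact div_le_self (sq_nonneg ν) hx

theorem tendsto_sqrt_mul_exp_neg_besselPhase_mul_hankel (ν : ℝ) :
    Tendsto (fun x : ℝ => √x * Complex.exp (-(besselPhase ν x * I)) * hankel 0 ν x) atTop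
      (𝓝 (√π * (1 + I))) := by
  have phase_error : Tendsto (fun x : ℝ =>
      Complex.exp (-((besselPhase ν x - (x - ν * π / 2) : ℝ) * I))) atTop (𝓝 1) := by
    simpa using ((tendsto_besselPhase_sub ν).ofReal.mul_const I).neg.cexp
  have limit := (phase_error.mul (tendsto_integral_saddleIntegrand_div_sqrt ν)).const_mul
    (Complex.exp (ν * (π / 2) * I))
  have exp_cancel : Complex.exp (ν * (π / 2) * I) * Complex.exp (-(ν * (π / 2) * I)) = 1 := by
    rw [← Complex.exp_add, add_neg_cancel, Complex.exp_zero]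
  rw [show Complex.exp (ν * (π / 2) * I) *
    (1 * (√π * (Complex.exp (-(ν * (π / 2) * I)) * (1 + I)))) = √π * (1 + I) by
      linear_combination (√π * (1 + I)) * exp_cancel] at limit
  refine limit.congr' ?_
  filter_upwards [eventually_gt_atTop 0] with x hx
  have combine_phases : Complex.exp (ν * (π / 2) * I) *
      Complex.exp (-((besselPhase ν x - (x - ν * π / 2) : ℝ) * I))
      = Complex.exp (-(besselPhase ν x * I)) * Complex.exp (x * I) := by
    rw [← Complex.exp_add, ← Complex.exp_add]
    push_cast
    ring_nf
  rw [hankel_zero_eq_integral_saddleIntegrand ν hx, ← sqrt_mul_integral_saddleIntegrand ν hx]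
  linear_combination (√x * ∫ u, saddleIntegrand ν x u) * combine_phases

theorem tendsto_sqrt_mul_besselJ_sub (ν : ℝ) :
    Tendsto (fun x : ℝ => √x * besselJ ν x - √(2 / π) * cos (besselPhase ν x - π / 4))
      atTop (𝓝 0) := by
  have remainder := (tendsto_sqrt_mul_exp_neg_besselPhase_mul_hankel ν).sub_const (√π * (1 + I))
  rw [sub_self] at remainder
  have bound := remainder.norm.const_mul π⁻¹
  rw [norm_zero, mul_zero] at bound
  refine squeeze_zero_norm (fun x => ?_) bound
  set φ := besselPhase ν x
  set error : ℂ := √x * Complex.exp (-(φ * I)) * hankel 0 ν x - √π * (1 + I)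
  have exp_cancel : Complex.exp (φ * I) * Complex.exp (-(φ * I)) = 1 := by
    rw [← Complex.exp_add, add_neg_cancel, Complex.exp_zero]
  have rotate : √x * hankel 0 ν x
      = Complex.exp (φ * I) * (√π * (1 + I)) + Complex.exp (φ * I) * error := by
    linear_combination (-(√x * hankel 0 ν x)) * exp_cancel
  have im_main : (Complex.exp (φ * I) * (√π * (1 + I))).im = √π * (sin φ + cos φ) := by
    simp [Complex.exp_ofReal_mul_I_re, Complex.exp_ofReal_mul_I_im]
    ring
  have im_hankel : √x * besselJ ν x - √(2 / π) * cos (φ - π / 4)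
      = π⁻¹ * (Complex.exp (φ * I) * error).im := by
    have := congrArg Complex.im rotate
    rw [Complex.im_ofReal_mul, Complex.add_im, im_main, hankel_zero_im] at this
    have main_eq : √(2 / π) * cos (φ - π / 4) = π⁻¹ * (√π * (sin φ + cos φ)) := by
      rw [cos_sub, cos_pi_div_four, sin_pi_div_four, sqrt_div zero_le_two, div_eq_mul_inv,
        ← sqrt_div_self]
      linear_combination √π / π / 2 * (sin φ + cos φ) * sq_sqrt (zero_le_two (α := ℝ))
    rw [main_eq, ← sub_eq_iff_eq_add'.mpr this]
    field_simp
  rw [im_hankel, norm_mul, norm_of_nonneg (by positivity)]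
  gcongr
  calc |(Complex.exp (φ * I) * error).im| ≤ ‖Complex.exp (φ * I) * error‖ :=
        Complex.abs_im_le_norm _
    _ = ‖error‖ := by rw [norm_mul, Complex.norm_exp_ofReal_mul_I, one_mul]

end HankelAsymptotics

section LiouvilleTransform

/-- The amplitude factor `(x² - ν²)^(1/4)` of the Liouville transformation of Bessel's equation. -/
noncomputable def liouvilleWeight (ν x : ℝ) : ℝ := √√(x ^ 2 - ν ^ 2)

/-- The Liouville-transformed solution `U = (x² - ν²)^(1/4) f`. -/
noncomputable def liouvilleValue (ν : ℝ) (f : ℝ → ℝ) (x : ℝ) : ℝ := liouvilleWeight ν x * f x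

/-- The derivative `V = dU/dφ` of the transformed solution `U` with respect to the Bessel phase
`φ`, where `f'` stands for the derivative of `f`. -/
noncomputable def liouvilleSlope (ν : ℝ) (f f' : ℝ → ℝ) (x : ℝ) : ℝ :=
  x ^ 2 / (2 * liouvilleWeight ν x ^ 5) * f x + x / liouvilleWeight ν x * f' x

/-- The density `ω` by which the transformed equation differs from the harmonic oscillator:
`dV = -U dφ - ω U dx`. -/
noncomputable def liouvilleDefect (ν x : ℝ) : ℝ :=
  (x ^ 3 + 4 * ν ^ 2 * x) / (4 * liouvilleWeight ν x ^ 10)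

/-- The integral of `liouvilleDefect ν` over `(x, ∞)`. -/
noncomputable def liouvilleTail (ν x : ℝ) : ℝ :=
  1 / (4 * liouvilleWeight ν x ^ 2) + 5 * ν ^ 2 / (12 * liouvilleWeight ν x ^ 6)

/-- The component `U sin (φ - α) + V cos (φ - α)` of a transformed solution, which would be
constant if `liouvilleDefect` vanished. -/
noncomputable def liouvilleComponent (ν : ℝ) (f f' : ℝ → ℝ) (α x : ℝ) : ℝ :=
  liouvilleValue ν f x * sin (besselPhase ν x - α)
    + liouvilleSlope ν f f' x * cos (besselPhase ν x - α)

variable {ν x : ℝ}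

lemma liouvilleWeight_pos (hν : 0 < ν) (hx : ν < x) : 0 < liouvilleWeight ν x :=
  sqrt_pos.mpr (sqrt_sq_sub_sq_pos hν hx)

lemma liouvilleWeight_sq (ν x : ℝ) : liouvilleWeight ν x ^ 2 = √(x ^ 2 - ν ^ 2) :=
  sq_sqrt (sqrt_nonneg _)

lemma liouvilleWeight_pow_four (hν : 0 < ν) (hx : ν < x) :
    liouvilleWeight ν x ^ 4 = x ^ 2 - ν ^ 2 := by
  rw [← sq_sqrt_sq_sub_sq hν hx, ← liouvilleWeight_sq]
  ring

lemma liouvilleWeight_le_sqrt (ν : ℝ) (hx : 0 ≤ x) : liouvilleWeight ν x ≤ √x :=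
  sqrt_le_sqrt (sqrt_le_iff.mpr ⟨hx, sub_le_self _ (sq_nonneg ν)⟩)

lemma hasDerivAt_liouvilleWeight (hν : 0 < ν) (hx : ν < x) :
    HasDerivAt (liouvilleWeight ν) (x / (2 * liouvilleWeight ν x ^ 3)) x := by
  refine ((hasDerivAt_sqrt_sq_sub_sq hν hx).sqrt (sqrt_sq_sub_sq_pos hν hx).ne').congr_deriv ?_
  rw [← liouvilleWeight_sq, sqrt_sq (liouvilleWeight_pos hν hx).le]
  field_simp

lemma hasDerivAt_liouvilleTail (hν : 0 < ν) (hx : ν < x) :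
    HasDerivAt (liouvilleTail ν) (-liouvilleDefect ν x) x := by
  have weight_pos := liouvilleWeight_pos hν hx
  have deriv_weight := hasDerivAt_liouvilleWeight hν hx
  refine (((hasDerivAt_const x (1 : ℝ)).fun_div ((deriv_weight.fun_pow 2).const_mul 4)
    (by positivity)).fun_add ((hasDerivAt_const x (5 * ν ^ 2)).fun_div
      ((deriv_weight.fun_pow 6).const_mul 12) (by positivity))).congr_deriv ?_
  have sq_eq : ν ^ 2 = x ^ 2 - liouvilleWeight ν x ^ 4 := by
    rw [liouvilleWeight_pow_four hν hx, sub_sub_cancel]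
  rw [liouvilleDefect, sq_eq]
  push_cast
  field_simp
  ring

lemma liouvilleDefect_nonneg (ν : ℝ) (hx : 0 ≤ x) : 0 ≤ liouvilleDefect ν x := by
  unfold liouvilleDefect
  positivity

lemma liouvilleTail_nonneg (ν x : ℝ) : 0 ≤ liouvilleTail ν x := by
  unfold liouvilleTail
  positivity

lemma liouvilleTail_le (hν : 0 < ν) (hx : ν < x) :
    liouvilleTail ν x ≤ 7 / 18 / besselPhase ν x := by
  have sqrt_pos := sqrt_sq_sub_sq_pos hν hx
  have phase_pos := besselPhase_pos hν hx
  have first_term : 1 / (4 * √(x ^ 2 - ν ^ 2)) ≤ 1 / 4 / besselPhase ν x := by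
    rw [div_div]
    gcongr
    exact besselPhase_le_sqrt hν.le x
  have second_term : 5 * ν ^ 2 / (12 * √(x ^ 2 - ν ^ 2) ^ 3) ≤ 5 / 36 / besselPhase ν x := by
    rw [div_div, div_le_div_iff₀ (by positivity) (by positivity)]
    linarith [three_mul_sq_mul_besselPhase_le hν hx.le]
  calc liouvilleTail ν x
      = 1 / (4 * √(x ^ 2 - ν ^ 2)) + 5 * ν ^ 2 / (12 * √(x ^ 2 - ν ^ 2) ^ 3) := by
        rw [liouvilleTail, ← liouvilleWeight_sq, ← pow_mul]
    _ ≤ 1 / 4 / besselPhase ν x + 5 / 36 / besselPhase ν x := add_le_add first_term second_term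
    _ = 7 / 18 / besselPhase ν x := by ring

lemma liouvilleValue_of_eq_zero {f : ℝ → ℝ} (ν : ℝ) (zero : f x = 0) :
    liouvilleValue ν f x = 0 := by
  rw [liouvilleValue, zero, mul_zero]

namespace IsBesselSolution

variable {f f' : ℝ → ℝ}

lemma hasDerivAt_liouvilleValue (hf : IsBesselSolution ν f f') (hν : 0 < ν) (hx : ν < x) :
    HasDerivAt (liouvilleValue ν f)
      (liouvilleWeight ν x ^ 2 / x * liouvilleSlope ν f f' x) x := by
  have hx₀ : 0 < x := hν.trans hx
  have weight_pos := liouvilleWeight_pos hν hx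
  refine ((hasDerivAt_liouvilleWeight hν hx).fun_mul (hf.hasDerivAt x hx₀)).congr_deriv ?_
  rw [liouvilleSlope]
  field_simp

lemma hasDerivAt_liouvilleSlope (hf : IsBesselSolution ν f f') (hν : 0 < ν) (hx : ν < x) :
    HasDerivAt (liouvilleSlope ν f f') (-(liouvilleWeight ν x ^ 2 / x * liouvilleValue ν f x)
      - liouvilleDefect ν x * liouvilleValue ν f x) x := by
  have hx₀ : 0 < x := hν.trans hx
  have weight_pos := liouvilleWeight_pos hν hx
  have deriv_weight := hasDerivAt_liouvilleWeight hν hx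
  have deriv_first := ((hasDerivAt_pow 2 x).fun_div ((deriv_weight.fun_pow 5).const_mul 2)
    (by positivity)).fun_mul (hf.hasDerivAt x hx₀)
  have deriv_second := ((hasDerivAt_id' x).fun_div deriv_weight weight_pos.ne').fun_mul
    (hf.hasDerivAt_deriv x hx₀)
  refine (deriv_first.fun_add deriv_second).congr_deriv ?_
  have sq_eq : ν ^ 2 = x ^ 2 - liouvilleWeight ν x ^ 4 := by
    rw [liouvilleWeight_pow_four hν hx, sub_sub_cancel]
  rw [liouvilleValue, liouvilleDefect, sq_eq]
  push_cast
  field_simp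
  ring

lemma hasDerivAt_liouvilleComponent (hf : IsBesselSolution ν f f') (hν : 0 < ν) (hx : ν < x)
    (α : ℝ) :
    HasDerivAt (liouvilleComponent ν f f' α)
      (-(liouvilleDefect ν x * liouvilleValue ν f x * cos (besselPhase ν x - α))) x := by
  have deriv_phase := (hasDerivAt_besselPhase hν hx).sub_const α
  rw [← liouvilleWeight_sq] at deriv_phase
  refine (((hf.hasDerivAt_liouvilleValue hν hx).fun_mul deriv_phase.sin).fun_add
    ((hf.hasDerivAt_liouvilleSlope hν hx).fun_mul deriv_phase.cos)).congr_deriv ?_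
  ring

-- The derivative is `-ω (U + V)² e^tail`.
lemma antitoneOn_liouville_energy (hf : IsBesselSolution ν f f') (hν : 0 < ν) :
    AntitoneOn (fun x => (liouvilleValue ν f x ^ 2 + liouvilleSlope ν f f' x ^ 2)
      * exp (liouvilleTail ν x)) (Ioi ν) := by
  have deriv_energy (x : ℝ) (hx : ν < x) :=
    (((hf.hasDerivAt_liouvilleValue hν hx).fun_pow 2).fun_add
      ((hf.hasDerivAt_liouvilleSlope hν hx).fun_pow 2)).fun_mul
        (hasDerivAt_liouvilleTail hν hx).exp
  refine antitoneOn_of_deriv_nonpos (convex_Ioi ν)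
    (fun x hx => (deriv_energy x hx).continuousAt.continuousWithinAt)
    (fun x hx => ?_) (fun x hx => ?_) <;> rw [interior_Ioi] at hx
  · exact (deriv_energy x hx).differentiableAt.differentiableWithinAt
  · have := liouvilleDefect_nonneg ν (hν.trans hx).le
    have square_nonneg : 0 ≤ exp (liouvilleTail ν x) * liouvilleDefect ν x
      * (liouvilleValue ν f x + liouvilleSlope ν f f' x) ^ 2 := by positivity
    rw [(deriv_energy x hx).deriv]
    push_cast
    linarith

variable {j : ℝ}

lemma abs_liouvilleValue_le (hf : IsBesselSolution ν f f') (hν : 0 < ν) (hj : ν < j)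
    (zero : f j = 0) (tail_le : liouvilleTail ν j ≤ 1) (hx : j ≤ x) :
    |liouvilleValue ν f x| ≤ 2 * |liouvilleSlope ν f f' j| := by
  have exp_tail_le : exp (liouvilleTail ν j) ≤ 4 :=
    (exp_le_exp.mpr tail_le).trans (by linarith [exp_one_lt_three])
  refine abs_le_of_sq_le_sq ?_ (by positivity)
  calc liouvilleValue ν f x ^ 2
      ≤ (liouvilleValue ν f x ^ 2 + liouvilleSlope ν f f' x ^ 2) * exp (liouvilleTail ν x) :=
        (le_add_of_nonneg_right (sq_nonneg _)).trans
          (le_mul_of_one_le_right (by positivity) (one_le_exp (liouvilleTail_nonneg ν x)))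
    _ ≤ (liouvilleValue ν f j ^ 2 + liouvilleSlope ν f f' j ^ 2) * exp (liouvilleTail ν j) :=
        hf.antitoneOn_liouville_energy hν hj (hj.trans_le hx) hx
    _ ≤ liouvilleSlope ν f f' j ^ 2 * 4 := by
        rw [liouvilleValue_of_eq_zero ν zero, zero_pow two_ne_zero, zero_add]
        gcongr
    _ = (2 * |liouvilleSlope ν f f' j|) ^ 2 := by
        rw [mul_pow, sq_abs]
        ring

lemma abs_liouvilleComponent_sub_le (hf : IsBesselSolution ν f f') (hν : 0 < ν) (hj : ν < j)
    (zero : f j = 0) (tail_le : liouvilleTail ν j ≤ 1) (hx : j ≤ x) (α : ℝ) :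
    |liouvilleComponent ν f f' α x - liouvilleComponent ν f f' α j|
      ≤ 2 * |liouvilleSlope ν f f' j| * (liouvilleTail ν j - liouvilleTail ν x) := by
  have deriv_component (y : ℝ) (hy : j ≤ y) :=
    (hf.hasDerivAt_liouvilleComponent hν (hj.trans_le hy) α).sub_const
      (liouvilleComponent ν f f' α j)
  have deriv_bound (y : ℝ) (hy : j ≤ y) :=
    ((hasDerivAt_liouvilleTail hν (hj.trans_le hy)).const_sub (liouvilleTail ν j)).const_mul
      (2 * |liouvilleSlope ν f f' j|)
  refine image_norm_le_of_norm_deriv_right_le_deriv_boundary'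
    (fun y hy => (deriv_component y hy.1).continuousAt.continuousWithinAt)
    (fun y hy => (deriv_component y hy.1).hasDerivWithinAt) (by simp)
    (fun y hy => (deriv_bound y hy.1).continuousAt.continuousWithinAt)
    (fun y hy => (deriv_bound y hy.1).hasDerivWithinAt) (fun y hy => ?_) ⟨hx, le_rfl⟩
  have defect_nonneg := liouvilleDefect_nonneg ν (hν.trans (hj.trans_le hy.1)).le
  calc ‖-(liouvilleDefect ν y * liouvilleValue ν f y * cos (besselPhase ν y - α))‖
      = liouvilleDefect ν y * |liouvilleValue ν f y| * |cos (besselPhase ν y - α)| := by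
        rw [norm_neg, norm_mul, norm_mul, norm_of_nonneg defect_nonneg, norm_eq_abs, norm_eq_abs]
    _ ≤ liouvilleDefect ν y * (2 * |liouvilleSlope ν f f' j|) * 1 := by
        gcongr
        · exact hf.abs_liouvilleValue_le hν hj zero tail_le hy.1
        · exact abs_cos_le_one _
    _ = 2 * |liouvilleSlope ν f f' j| * - -liouvilleDefect ν y := by ring

end IsBesselSolution

end LiouvilleTransform

section ZeroAsymptotics

variable {ν j : ℝ}

lemma deriv_besselJ_ne_zero (hν : 0 < ν) {J' : ℝ → ℝ} (hJ : IsBesselSolution ν (besselJ ν) J')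
    (hj : 0 < j) (zero : besselJ ν j = 0) : J' j ≠ 0 := by
  intro deriv_zero
  obtain ⟨Y', hY⟩ := exists_isBesselSolution_besselY ν
  obtain ⟨c, hc⟩ := hJ.exists_wronskian_eq hY
  refine wronskian_besselJ_besselY_ne_zero hν hJ hY hc ?_
  rw [← hc j hj, zero, deriv_zero]
  ring

lemma liouvilleSlope_besselJ_ne_zero (hν : 0 < ν) {J' : ℝ → ℝ}
    (hJ : IsBesselSolution ν (besselJ ν) J') (hj : ν < j) (zero : besselJ ν j = 0) :
    liouvilleSlope ν (besselJ ν) J' j ≠ 0 := by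
  rw [liouvilleSlope, zero, mul_zero, zero_add]
  exact mul_ne_zero (div_pos (hν.trans hj) (liouvilleWeight_pos hν hj)).ne'
    (deriv_besselJ_ne_zero hν hJ (hν.trans hj) zero)

lemma frequently_besselPhase_sub_eq (hν : 0 < ν) (α : ℝ) :
    ∃ᶠ x in atTop, cos (besselPhase ν x - α) = 0 ∧ sin (besselPhase ν x - α) = 1 := by
  refine frequently_atTop.mpr fun b => ?_
  obtain ⟨n, hn⟩ := exists_nat_ge (max (besselPhase ν (max b ν)) 0 - α)
  have n_le : (n : ℝ) ≤ n * (2 * π) :=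
    le_mul_of_one_le_right n.cast_nonneg (by linarith [pi_gt_three])
  have phase_pos : 0 < π / 2 + α + n * (2 * π) := by
    linarith [pi_pos, le_max_right (besselPhase ν (max b ν)) 0]
  obtain ⟨x, hx, phase_x⟩ := exists_besselPhase_eq hν phase_pos
  have phase_sub : besselPhase ν x - α = π / 2 + n * (2 * π) := by linarith
  refine ⟨x, (le_max_left b ν).trans ?_, ?_, ?_⟩
  · rw [← (strictMonoOn_besselPhase hν).le_iff_le (le_max_right b ν) hx.le, phase_x]
    linarith [pi_pos, le_max_left (besselPhase ν (max b ν)) 0]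
  · rw [phase_sub, cos_add_nat_mul_two_pi, cos_pi_div_two]
  · rw [phase_sub, sin_add_nat_mul_two_pi, sin_pi_div_two]

lemma frequently_abs_liouvilleComponent_besselJ_lt (hν : 0 < ν) (J' : ℝ → ℝ) {ε : ℝ} (hε : 0 < ε) :
    ∃ᶠ x in atTop, |liouvilleComponent ν (besselJ ν) J' (π / 4) x| < ε := by
  have error_lt := (tendsto_sqrt_mul_besselJ_sub ν).abs.eventually_lt_const
    (abs_zero.trans_lt hε)
  refine ((frequently_besselPhase_sub_eq hν (π / 4)).and_eventually
    (error_lt.and (eventually_ge_atTop 0))).mono ?_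
  rintro x ⟨⟨cos_eq, sin_eq⟩, error_lt, hx⟩
  rw [cos_eq, mul_zero, sub_zero] at error_lt
  refine lt_of_le_of_lt ?_ error_lt
  rw [liouvilleComponent, cos_eq, sin_eq, mul_one, mul_zero, add_zero, liouvilleValue, abs_mul,
    abs_mul, liouvilleWeight, abs_of_nonneg (sqrt_nonneg _), abs_of_nonneg (sqrt_nonneg _)]
  exact mul_le_mul_of_nonneg_right (liouvilleWeight_le_sqrt ν hx) (abs_nonneg _)

lemma abs_cos_besselPhase_sub_le (hν : 0 < ν) (hj : ν < j) (zero : besselJ ν j = 0)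
    (tail_le : liouvilleTail ν j ≤ 1) :
    |cos (besselPhase ν j - π / 4)| ≤ 2 * liouvilleTail ν j := by
  obtain ⟨J', hJ⟩ := exists_isBesselSolution_besselJ ν
  have slope_pos := abs_pos.mpr (liouvilleSlope_besselJ_ne_zero hν hJ hj zero)
  have component_j : liouvilleComponent ν (besselJ ν) J' (π / 4) j
      = liouvilleSlope ν (besselJ ν) J' j * cos (besselPhase ν j - π / 4) := by
    rw [liouvilleComponent, liouvilleValue_of_eq_zero ν zero, zero_mul, zero_add]
  refine le_of_mul_le_mul_left ?_ slope_pos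
  rw [← abs_mul, ← component_j]
  refine le_of_forall_pos_lt_add fun ε hε => ?_
  obtain ⟨x, component_x, hx⟩ := ((frequently_abs_liouvilleComponent_besselJ_lt hν J'
    hε).and_eventually (eventually_ge_atTop j)).exists
  have drift := hJ.abs_liouvilleComponent_sub_le hν hj zero tail_le hx (π / 4)
  have tail_x := mul_nonneg slope_pos.le (liouvilleTail_nonneg ν x)
  have := abs_sub_abs_le_abs_sub (liouvilleComponent ν (besselJ ν) J' (π / 4) j)
    (liouvilleComponent ν (besselJ ν) J' (π / 4) x)
  rw [abs_sub_comm] at this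
  linarith

lemma abs_div_pi_sub_le_abs_cos_div_two {φ : ℝ} {k : ℕ}
    (hφ : φ ∈ Icc (((k : ℝ) - 1 / 2) * π) (k * π)) :
    |φ / π - (k - 1 / 4)| ≤ |cos (φ - π / 4)| / 2 := by
  set δ := φ - (k - 1 / 4) * π with hδ
  have abs_δ_le : |δ| ≤ π / 2 := abs_le.mpr ⟨by linarith [hφ.1, pi_pos], by linarith [hφ.2, pi_pos]⟩
  have abs_cos_eq : |cos (φ - π / 4)| = |sin δ| := by
    rw [show φ - π / 4 = δ - π / 2 + k * π by rw [hδ]; ring, cos_add_nat_mul_pi, abs_mul, abs_pow,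
      abs_neg, abs_one, one_pow, one_mul, cos_sub_pi_div_two]
  calc |φ / π - (k - 1 / 4)| = 2 / π * |δ| / 2 := by
        rw [show φ / π - (k - 1 / 4) = δ / π by rw [hδ]; field_simp, abs_div, abs_of_pos pi_pos]
        ring
    _ ≤ |sin δ| / 2 := by
        gcongr
        exact mul_abs_le_abs_sin abs_δ_le
    _ = |cos (φ - π / 4)| / 2 := by rw [abs_cos_eq]

theorem zero_approx_large_nu_near_general {k : ℕ} (hν : 0 < ν) (hk : 1 ≤ k)
    (hj : IsKthZero ν k j) : |j * gfun (ν / j) - ((k : ℝ) - 1 / 4)| ≤ 7 / 18 / (k : ℝ) := by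
  have ⟨hj₀, zero, _⟩ := hj
  have hνj : ν < j := lt_of_besselJ_eq_zero hν hj₀ zero
  have phase_mem := besselPhase_mem_Ioo_of_besselJ_eq_zero hν hνj zero
  rw [phaseWindow_eq_of_isKthZero hν hk hj] at phase_mem
  have one_le_k : (1 : ℝ) ≤ k := by exact_mod_cast hk
  have k_le_phase : (k : ℝ) ≤ besselPhase ν j := by nlinarith [phase_mem.1, pi_gt_three]
  have tail_le : liouvilleTail ν j ≤ 7 / 18 / k :=
    (liouvilleTail_le hν hνj).trans (by gcongr)
  have tail_le_one : liouvilleTail ν j ≤ 1 :=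
    tail_le.trans ((div_le_one (by positivity)).mpr (by linarith))
  calc |j * gfun (ν / j) - ((k : ℝ) - 1 / 4)| = |besselPhase ν j / π - (k - 1 / 4)| := by
        rw [mul_gfun_div hj₀]
    _ ≤ |cos (besselPhase ν j - π / 4)| / 2 :=
        abs_div_pi_sub_le_abs_cos_div_two (Ioo_subset_Icc_self phase_mem)
    _ ≤ 7 / 18 / k := by linarith [abs_cos_besselPhase_sub_le hν hνj zero tail_le_one]

end ZeroAsymptotics

/-- for large `ν`, the zeros with `ν < j < (1+c)ν` satisfy
`j g(ν/j) = k - 1/4 + O(1/k)`. -/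
theorem zero_approx_large_nu_near (c : ℝ) (hc : 0 < c) :
    ∃ N C : ℝ, 0 < N ∧ 0 < C ∧ ∀ ν : ℝ, N ≤ ν → ∀ k : ℕ, 1 ≤ k → ∀ j : ℝ,
      IsKthZero ν k j → ν < j → j < (1 + c) * ν →
      |j * gfun (ν / j) - ((k : ℝ) - 1 / 4)| ≤ C / (k : ℝ) := by
  exact ⟨1, 7 / 18, one_pos, by norm_num, fun _ hν _ hk _ hj _ _ =>
    zero_approx_large_nu_near_general (one_pos.trans_le hν) hk hj⟩
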